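/- arXiv:1506.04359 — 3 statements merged into one kernel-verified Lean document; each statement's English description precedes it below -/
import Mathlib

section
/- Let X be a set, let n, c ≥ 1, let x_1,…,x_n ∈ X, and let H be a nonempty countable set of functions h = (h_1,…,h_c) : X → ℝ^c. Assume that the two suprema below are integrable with respect to the relevant Gaussian product measures. Then E[sup_{h∈H} Σ_{i=1}^n g_i · max{h_1(x_i),…,h_c(x_i)}] ≤ E[sup_{h∈H} Σ_{i=1}^n Σ_{j=1}^c g_{ij} · h_j(x_i)], where on the left g_1,…,g_n are i.i.d. standard Gaussian N(0,1) random variables and on the right g_{ij} (i = 1,…,n, j = 1,…,c) are i.i.d. standard Gaussian N(0,1) random variables. -/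
open MeasureTheory ProbabilityTheory

/-!
A bounded offset `r t` is carried along throughout. For one sample point, symmetrise `u`: the even
part of `u ↦ ⨆ t, (u * ⨆ j, a t j + r t)` is at most `⨆ j, f j u`, where `f j` is the even part of
`u ↦ ⨆ t, (u * a t j + r t)`. Each `f j` is convex and even, hence nondecreasing in `|u|`, so the
superlevel sets of the `f j` form a chain. At every level one of them is the union of all, and
therefore evaluating the `f j` at independent copies of `u` can only increase the law of their
maximum. Finally, averaging over random signs of the other coordinates (Jensen) bounds `f j (g j)`
by the average of `⨆ t, (∑ i, g i * a t i + r t)`.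

The offset lets this one-point inequality be applied conditionally on the remaining sample points,
and Fubini then sums it over all of them. Pointwise boundedness of the suprema forces `a` itself to
be bounded, which supplies the integrability, and a countable subset of the index set that is dense
for the values of `a` has the same suprema.
-/

open Set
open scoped BigOperators

section StochasticDominance

variable {A B : Type*} [MeasurableSpace A] [MeasurableSpace B] {μ : Measure A} {ν : Measure B}

lemma lintegral_ofReal_eq_lintegral_meas_lt {f : A → ℝ} (hf : AEMeasurable f μ) :
    ∫⁻ a, ENNReal.ofReal (f a) ∂μ = ∫⁻ t in Ioi (0 : ℝ), μ {a | t < f a} := by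
  calc ∫⁻ a, ENNReal.ofReal (f a) ∂μ = ∫⁻ a, ENNReal.ofReal (max (f a) 0) ∂μ := by simp
    _ = ∫⁻ t in Ioi (0 : ℝ), μ {a | t < max (f a) 0} :=
      lintegral_eq_lintegral_meas_lt μ (ae_of_all _ fun _ => le_max_right _ _)
        (hf.max aemeasurable_const)
    _ = ∫⁻ t in Ioi (0 : ℝ), μ {a | t < f a} :=
      setLIntegral_congr_fun measurableSet_Ioi fun t (ht : 0 < t) => by
        simp only [lt_max_iff, ht.not_gt, or_false]

lemma lintegral_ofReal_eq_lintegral_meas_le {f : A → ℝ} (hf : AEMeasurable f μ) :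
    ∫⁻ a, ENNReal.ofReal (f a) ∂μ = ∫⁻ t in Ioi (0 : ℝ), μ {a | t ≤ f a} := by
  rw [lintegral_ofReal_eq_lintegral_meas_lt hf]
  exact (lintegral_congr_ae (meas_le_ae_eq_meas_lt μ _ f)).symm

theorem integral_le_integral_of_forall_measure_lt_le [IsProbabilityMeasure μ]
    [IsProbabilityMeasure ν] {f : A → ℝ} {g : B → ℝ} (hf : Integrable f μ) (hg : Integrable g ν)
    (h : ∀ t, μ {a | t < f a} ≤ ν {b | t < g b}) : ∫ a, f a ∂μ ≤ ∫ b, g b ∂ν := by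
  have h_compl (t : ℝ) : ν {b | t ≤ -g b} ≤ μ {a | t ≤ -f a} := by
    have hf_compl : {a | t ≤ -f a} = {a | -t < f a}ᶜ := by ext; simp [le_neg]
    have hg_compl : {b | t ≤ -g b} = {b | -t < g b}ᶜ := by ext; simp [le_neg]
    rw [hf_compl, hg_compl,
      prob_compl_eq_one_sub₀ (nullMeasurableSet_lt aemeasurable_const hf.aemeasurable),
      prob_compl_eq_one_sub₀ (nullMeasurableSet_lt aemeasurable_const hg.aemeasurable)]
    exact tsub_le_tsub_left (h _) 1
  have h_pos : ∫⁻ a, ENNReal.ofReal (f a) ∂μ ≤ ∫⁻ b, ENNReal.ofReal (g b) ∂ν := by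
    rw [lintegral_ofReal_eq_lintegral_meas_lt hf.aemeasurable,
      lintegral_ofReal_eq_lintegral_meas_lt hg.aemeasurable]
    exact lintegral_mono h
  have h_neg : ∫⁻ b, ENNReal.ofReal (-g b) ∂ν ≤ ∫⁻ a, ENNReal.ofReal (-f a) ∂μ := by
    rw [lintegral_ofReal_eq_lintegral_meas_le hf.aemeasurable.fun_neg,
      lintegral_ofReal_eq_lintegral_meas_le hg.aemeasurable.fun_neg]
    exact lintegral_mono h_compl
  rw [integral_eq_lintegral_pos_part_sub_lintegral_neg_part hf,
    integral_eq_lintegral_pos_part_sub_lintegral_neg_part hg]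
  exact sub_le_sub (ENNReal.toReal_mono hg.lintegral_lt_top.ne h_pos)
    (ENNReal.toReal_mono hf.neg.lintegral_lt_top.ne h_neg)

end StochasticDominance

section Envelope

variable {T A B : Type*} [MeasurableSpace A] [MeasurableSpace B] {μ : Measure A}

/-- A family of real random variables, each measurable, dominated by a single integrable
envelope. For a countable index set this makes the pointwise supremum integrable. The bound is
required everywhere, not almost everywhere, so that every slice of the family is bounded. -/
structure HasIntegrableEnvelope (F : T → A → ℝ) (μ : Measure A) : Prop where
  aemeasurable : ∀ t, AEMeasurable (F t) μ
  exists_bound : ∃ b : A → ℝ, Integrable b μ ∧ ∀ t x, |F t x| ≤ b x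

namespace HasIntegrableEnvelope

variable {F G : T → A → ℝ}

lemma exists_abs_le (hF : HasIntegrableEnvelope F μ) (x : A) : ∃ C, ∀ t, |F t x| ≤ C :=
  let ⟨b, _, hb⟩ := hF.exists_bound
  ⟨b x, fun t => hb t x⟩

lemma bddAbove (hF : HasIntegrableEnvelope F μ) (x : A) : BddAbove (range fun t => F t x) :=
  let ⟨C, hC⟩ := hF.exists_abs_le x
  ⟨C, forall_mem_range.2 fun t => (abs_le.1 (hC t)).2⟩

theorem integrable_iSup [Countable T] [Nonempty T] (hF : HasIntegrableEnvelope F μ) :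
    Integrable (fun x => ⨆ t, F t x) μ := by
  obtain ⟨b, hb_int, hb⟩ := hF.exists_bound
  refine hb_int.mono' (AEMeasurable.iSup hF.aemeasurable).aestronglyMeasurable
    (ae_of_all _ fun x => abs_le.2 ⟨?_, ciSup_le fun t => (abs_le.1 (hb t x)).2⟩)
  exact le_ciSup_of_le (hF.bddAbove x) (Classical.arbitrary T) (abs_le.1 (hb _ x)).1

lemma add (hF : HasIntegrableEnvelope F μ) (hG : HasIntegrableEnvelope G μ) :
    HasIntegrableEnvelope (fun t x => F t x + G t x) μ := by
  obtain ⟨b, hb_int, hb⟩ := hF.exists_bound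
  obtain ⟨c, hc_int, hc⟩ := hG.exists_bound
  exact ⟨fun t => (hF.aemeasurable t).add (hG.aemeasurable t), _, hb_int.add hc_int,
    fun t x => (abs_add_le _ _).trans (add_le_add (hb t x) (hc t x))⟩

lemma sum {ι : Type*} [Fintype ι] {F : ι → T → A → ℝ}
    (hF : ∀ i, HasIntegrableEnvelope (F i) μ) :
    HasIntegrableEnvelope (fun t x => ∑ i, F i t x) μ := by
  choose b hb_int hb using fun i => (hF i).exists_bound
  refine ⟨fun t => Finset.aemeasurable_fun_sum _ fun i _ => (hF i).aemeasurable t, _,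
    integrable_finsetSum Finset.univ fun i _ => hb_int i, fun t x => ?_⟩
  exact (Finset.abs_sum_le_sum_abs _ _).trans (Finset.sum_le_sum fun i _ => hb i t x)

lemma comp_measurePreserving {ν : Measure B} {φ : B → A} (hF : HasIntegrableEnvelope F μ)
    (hφ : MeasurePreserving φ ν μ) : HasIntegrableEnvelope (fun t y => F t (φ y)) ν := by
  obtain ⟨b, hb_int, hb⟩ := hF.exists_bound
  exact ⟨fun t => (hF.aemeasurable t).comp_quasiMeasurePreserving hφ.quasiMeasurePreserving, _,
    hφ.integrable_comp_of_integrable hb_int, fun t y => hb t (φ y)⟩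

lemma mul_const {f : A → ℝ} {c : T → ℝ} (hf : Integrable f μ) (hc : ∃ C, ∀ t, |c t| ≤ C) :
    HasIntegrableEnvelope (fun t x => f x * c t) μ := by
  obtain ⟨C, hC⟩ := hc
  refine ⟨fun t => hf.aemeasurable.mul_const _, _, hf.abs.mul_const C, fun t x => ?_⟩
  rw [abs_mul]
  exact mul_le_mul_of_nonneg_left (hC t) (abs_nonneg _)

lemma const [IsFiniteMeasure μ] {c : T → ℝ} (hc : ∃ C, ∀ t, |c t| ≤ C) :
    HasIntegrableEnvelope (fun t _ => c t) μ := by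
  simpa only [one_mul] using mul_const (integrable_const (1 : ℝ)) hc

lemma of_finite [Finite T] (hF : ∀ t, Integrable (F t) μ) : HasIntegrableEnvelope F μ :=
  have := Fintype.ofFinite T
  ⟨fun t => (hF t).aemeasurable, _, integrable_finsetSum Finset.univ fun t _ => (hF t).abs,
    fun t x => Finset.single_le_sum (f := fun s => |F s x|) (fun _ _ => abs_nonneg _)
      (Finset.mem_univ t)⟩

end HasIntegrableEnvelope

end Envelope

section Comonotone

variable {Ω κ : Type*}

lemma exists_forall_lt_imp_lt_of_monovary [Finite κ] [Nonempty κ] {f : κ → Ω → ℝ}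
    (hf : ∀ i j, Monovary (f i) (f j)) (t : ℝ) : ∃ j, ∀ i ω, t < f i ω → t < f j ω := by
  have h_total (i j : κ) : {ω | t < f i ω} ⊆ {ω | t < f j ω} ∨
      {ω | t < f j ω} ⊆ {ω | t < f i ω} := by
    by_contra! h
    obtain ⟨⟨x, hxi, hxj⟩, y, hyj, hyi⟩ := h.imp not_subset.1 not_subset.1
    exact hyi (hxi.trans_le (hf i j ((not_lt.1 hxj).trans_lt hyj)))
  have h_directed : Directed (· ⊆ ·) fun i => {ω | t < f i ω} := fun i j =>
    (h_total i j).elim (fun h => ⟨j, h, subset_rfl⟩) fun h => ⟨i, subset_rfl, h⟩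
  exact h_directed.finite_le id

theorem integral_iSup_le_integral_iSup_eval_of_monovary [MeasurableSpace Ω] [Fintype κ]
    [Nonempty κ] {μ : Measure Ω} [IsProbabilityMeasure μ] {f : κ → Ω → ℝ}
    (hf_int : ∀ j, Integrable (f j) μ) (hf : ∀ i j, Monovary (f i) (f j)) :
    ∫ ω, ⨆ j, f j ω ∂μ ≤ ∫ ω, ⨆ j, f j (ω j) ∂(Measure.pi fun _ : κ => μ) := by
  have h_eval (j : κ) := measurePreserving_eval (fun _ : κ => μ) j
  refine integral_le_integral_of_forall_measure_lt_le
    (HasIntegrableEnvelope.of_finite hf_int).integrable_iSup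
    (HasIntegrableEnvelope.of_finite fun j =>
      (h_eval j).integrable_comp_of_integrable (hf_int j)).integrable_iSup fun t => ?_
  obtain ⟨j, hj⟩ := exists_forall_lt_imp_lt_of_monovary hf t
  have h_meas : NullMeasurableSet {x | t < f j x} μ :=
    nullMeasurableSet_lt aemeasurable_const (hf_int j).aemeasurable
  calc μ {x | t < ⨆ i, f i x} ≤ μ {x | t < f j x} :=
        measure_mono fun x hx => (exists_lt_of_lt_ciSup hx).elim fun i => hj i x
    _ = Measure.pi (fun _ : κ => μ) {ω | t < f j (ω j)} :=
        ((h_eval j).measure_preimage h_meas).symm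
    _ ≤ Measure.pi (fun _ : κ => μ) {ω | t < ⨆ i, f i (ω i)} :=
        measure_mono fun ω hω =>
          lt_of_lt_of_le hω (le_ciSup (Finite.bddAbove_range fun i => f i (ω i)) j)

end Comonotone

section EvenSup

variable {T : Type*} {b b' r r' : T → ℝ}

/-- The even part of the convex function `u ↦ ⨆ t, (u * b t + r t)`, that is, its average over a
random sign of `u`. -/
noncomputable def evenSup (b r : T → ℝ) (u : ℝ) : ℝ :=
  ((⨆ t, (u * b t + r t)) + ⨆ t, (-u * b t + r t)) / 2

lemma evenSup_neg (b r : T → ℝ) (u : ℝ) : evenSup b r (-u) = evenSup b r u := by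
  simp only [evenSup, neg_neg, add_comm]

lemma integral_evenSup {μ : Measure ℝ} [μ.IsNegInvariant]
    (h_int : Integrable (fun u => ⨆ t, (u * b t + r t)) μ) :
    ∫ u, evenSup b r u ∂μ = ∫ u, ⨆ t, (u * b t + r t) ∂μ := by
  have h_neg := integral_neg_eq_self (fun u => ⨆ t, (u * b t + r t)) μ
  simp only [evenSup]
  rw [integral_div, integral_add h_int h_int.comp_neg, h_neg, add_self_div_two]

lemma integrable_evenSup {μ : Measure ℝ} [μ.IsNegInvariant]
    (h_int : Integrable (fun u => ⨆ t, (u * b t + r t)) μ) : Integrable (evenSup b r) μ :=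
  (h_int.add h_int.comp_neg).div_const 2

variable [Nonempty T]

lemma evenSup_le_evenSup_of_abs_le (hb : ∀ u : ℝ, BddAbove (range fun t => u * b t + r t))
    {u v : ℝ} (huv : |u| ≤ |v|) : evenSup b r u ≤ evenSup b r v := by
  refine div_le_div_of_nonneg_right (ciSup_add_ciSup_le fun s t => ?_) zero_le_two
  have h_abs : u * (b s - b t) ≤ |v * (b s - b t)| := by
    refine (le_abs_self _).trans ?_
    rw [abs_mul, abs_mul]
    exact mul_le_mul_of_nonneg_right huv (abs_nonneg _)
  have hs := le_ciSup (hb v) s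
  have ht := le_ciSup (hb v) t
  have hs' := le_ciSup (hb (-v)) s
  have ht' := le_ciSup (hb (-v)) t
  rcases abs_cases (v * (b s - b t)) with h | h <;> linarith

lemma monovary_evenSup (hb : ∀ u : ℝ, BddAbove (range fun t => u * b t + r t))
    (hb' : ∀ u : ℝ, BddAbove (range fun t => u * b' t + r' t)) :
    Monovary (evenSup b r) (evenSup b' r') := fun _ _ h =>
  evenSup_le_evenSup_of_abs_le hb
    (not_lt.1 fun h_abs => h.not_ge (evenSup_le_evenSup_of_abs_le hb' h_abs.le))

lemma evenSup_iSup_le_iSup_evenSup {κ : Type*} [Finite κ] [Nonempty κ] {a : T → κ → ℝ}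
    (ha : ∀ j (u : ℝ), BddAbove (range fun t => u * a t j + r t)) (u : ℝ) :
    evenSup (fun t => ⨆ j, a t j) r u ≤ ⨆ j, evenSup (fun t => a t j) r u := by
  wlog hu : 0 ≤ u generalizing u
  · simpa only [evenSup_neg] using this (-u) (by linarith)
  have h_sup : (⨆ t, (u * (⨆ j, a t j) + r t)) + (⨆ t, (-u * (⨆ j, a t j) + r t)) ≤
      2 * ⨆ j, evenSup (fun t => a t j) r u := by
    refine ciSup_add_ciSup_le fun s t => ?_
    obtain ⟨j, hj⟩ := exists_eq_ciSup_of_finite (f := a s)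
    have h_max : u * a t j ≤ u * ⨆ j, a t j :=
      mul_le_mul_of_nonneg_left (le_ciSup (Finite.bddAbove_range (a t)) j) hu
    have hs : u * a s j + r s ≤ _ := le_ciSup (ha j u) s
    have ht : -u * a t j + r t ≤ _ := le_ciSup (ha j (-u)) t
    have h_even : evenSup (fun t => a t j) r u ≤ _ :=
      le_ciSup (Finite.bddAbove_range fun j => evenSup (fun t => a t j) r u) j
    rw [← hj]
    unfold evenSup at h_even ⊢
    linarith
  unfold evenSup at h_sup ⊢
  linarith

end EvenSup

section SignAverage

variable {κ : Type*} [Fintype κ] {μ : Measure ℝ} [SigmaFinite μ] [μ.IsNegInvariant]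

lemma measurePreserving_signs_smul (ε : κ → ℤˣ) :
    MeasurePreserving (fun g : κ → ℝ => ε • g) (Measure.pi fun _ => μ) (Measure.pi fun _ => μ) := by
  refine measurePreserving_pi (f := fun j (x : ℝ) => ε j • x) _ _ fun j => ?_
  rcases Int.units_eq_one_or (ε j) with h | h
  · simpa only [h, one_smul] using! MeasurePreserving.id μ
  · simpa only [h, Units.neg_smul, one_smul] using! Measure.measurePreserving_neg μ

lemma integrable_comp_signs_smul {F : (κ → ℝ) → ℝ}
    (hF : Integrable F (Measure.pi fun _ => μ)) (ε : κ → ℤˣ) :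
    Integrable (fun g => F (ε • g)) (Measure.pi fun _ => μ) :=
  (measurePreserving_signs_smul ε).integrable_comp_of_integrable hF

lemma integrable_expect_signs_smul [DecidableEq κ] {F : (κ → ℝ) → ℝ}
    (hF : Integrable F (Measure.pi fun _ => μ)) :
    Integrable (fun g => 𝔼 ε : κ → ℤˣ, F (ε • g)) (Measure.pi fun _ => μ) := by
  simp only [Fintype.expect_eq_sum_div_card]
  exact (integrable_finsetSum _ fun ε _ => integrable_comp_signs_smul hF ε).div_const _

lemma integral_expect_signs_smul [DecidableEq κ] {F : (κ → ℝ) → ℝ}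
    (hF : Integrable F (Measure.pi fun _ => μ)) :
    ∫ g, 𝔼 ε : κ → ℤˣ, F (ε • g) ∂(Measure.pi fun _ => μ) = ∫ g, F g ∂(Measure.pi fun _ => μ) := by
  have h_invariant (ε : κ → ℤˣ) :
      ∫ g, F (ε • g) ∂(Measure.pi fun _ => μ) = ∫ g, F g ∂(Measure.pi fun _ => μ) := by
    have hε := measurePreserving_signs_smul (μ := μ) ε
    have h_map := integral_map hε.aemeasurable (f := F) (hε.map_eq.symm ▸ hF.aestronglyMeasurable)
    rwa [hε.map_eq, eq_comm] at h_map
  simp only [Fintype.expect_eq_sum_div_card]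
  rw [integral_div, integral_finsetSum _ fun ε _ => integrable_comp_signs_smul hF ε,
    ← Fintype.expect_eq_sum_div_card]
  simp only [h_invariant, Fintype.expect_const]

variable {T : Type*} [Nonempty T] {a : T → κ → ℝ} {r : T → ℝ}

lemma iSup_mul_add_le_midpoint [DecidableEq κ]
    (h : ∀ g : κ → ℝ, BddAbove (range fun t => ∑ i, g i * a t i + r t)) (j : κ) (g : κ → ℝ) :
    ⨆ t, (g j * a t j + r t) ≤ ((⨆ t, (∑ i, g i * a t i + r t)) +
      ⨆ t, (∑ i, (Function.update (-1 : κ → ℤˣ) j 1 • g) i * a t i + r t)) / 2 := by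
  refine ciSup_le fun t => ?_
  have h_cancel : ∑ i, g i * a t i + ∑ i, (Function.update (-1 : κ → ℤˣ) j 1 • g) i * a t i =
      2 * (g j * a t j) := by
    rw [← Finset.sum_add_distrib, Finset.sum_eq_single j]
    · simp [two_mul]
    · intro i _ hij
      simp [hij]
    · simp
  have h_fst := le_ciSup (h g) t
  have h_snd := le_ciSup (h (Function.update (-1 : κ → ℤˣ) j 1 • g)) t
  linarith

lemma expect_signs_apply_smul [DecidableEq κ] (F : ℝ → ℝ) (g : κ → ℝ) (j : κ) :
    𝔼 ε : κ → ℤˣ, F ((ε • g) j) = (F (g j) + F (-g j)) / 2 := by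
  have h_neg : 𝔼 ε : κ → ℤˣ, F (-(ε • g) j) = 𝔼 ε : κ → ℤˣ, F ((ε • g) j) :=
    Fintype.expect_equiv (Equiv.neg _) _ _ fun ε => by simp
  have h_pair (ε : κ → ℤˣ) : F ((ε • g) j) + F (-(ε • g) j) = F (g j) + F (-g j) := by
    rcases Int.units_eq_one_or (ε j) with h | h <;> simp [h, add_comm]
  have h_sum : 𝔼 ε : κ → ℤˣ, (F ((ε • g) j) + F (-(ε • g) j)) = F (g j) + F (-g j) := by
    simp only [h_pair, Fintype.expect_const]
  rw [Finset.expect_add_distrib, h_neg] at h_sum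
  linarith

theorem evenSup_le_expect_signs [DecidableEq κ]
    (h : ∀ g : κ → ℝ, BddAbove (range fun t => ∑ i, g i * a t i + r t)) (j : κ) (g : κ → ℝ) :
    evenSup (fun t => a t j) r (g j) ≤
      𝔼 ε : κ → ℤˣ, ⨆ t, (∑ i, (ε • g) i * a t i + r t) := by
  set Ψ : (κ → ℝ) → ℝ := fun g => ⨆ t, (∑ i, g i * a t i + r t)
  set δ : κ → ℤˣ := Function.update (-1) j 1
  have h_translate : 𝔼 ε : κ → ℤˣ, Ψ (δ • ε • g) = 𝔼 ε : κ → ℤˣ, Ψ (ε • g) :=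
    Fintype.expect_equiv (Equiv.mulLeft δ) _ _ fun ε => by simp [mul_smul]
  calc evenSup (fun t => a t j) r (g j)
      = 𝔼 ε : κ → ℤˣ, ⨆ t, ((ε • g) j * a t j + r t) :=
        (expect_signs_apply_smul (fun u => ⨆ t, (u * a t j + r t)) g j).symm
    _ ≤ 𝔼 ε : κ → ℤˣ, (Ψ (ε • g) + Ψ (δ • ε • g)) / 2 :=
        Finset.expect_le_expect fun ε _ => iSup_mul_add_le_midpoint h j (ε • g)
    _ = 𝔼 ε : κ → ℤˣ, Ψ (ε • g) := by
        rw [← Finset.expect_div, Finset.expect_add_distrib, h_translate, add_self_div_two]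

end SignAverage

section ExpectedSup

lemma integral_pi_finSucc {A : Type*} [MeasurableSpace A] {μ : Measure A} [SigmaFinite μ] (n : ℕ)
    (f : (Fin (n + 1) → A) → ℝ) :
    ∫ x, f x ∂(Measure.pi fun _ => μ) =
      ∫ z : A × (Fin n → A), f (Fin.cons z.1 z.2) ∂(μ.prod (Measure.pi fun _ => μ)) := by
  rw [← ((measurePreserving_piFinSuccAbove (fun _ : Fin (n + 1) => μ) 0).symm).integral_comp']
  simp only [MeasurableEquiv.piFinSuccAbove_symm_apply, Fin.insertNthEquiv_zero]
  rfl

variable {T A A' B B' : Type*} [MeasurableSpace A] [MeasurableSpace A'] [MeasurableSpace B]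
  [MeasurableSpace B']

/-- The process `p` under `μ` is dominated by the process `q` under `ν` in expected supremum,
uniformly over all bounded deterministic offsets `r`. Quantifying over the offsets is what makes
the relation stable under adding independent processes. -/
def ExpectedSupLE (p : T → A → ℝ) (μ : Measure A) (q : T → B → ℝ) (ν : Measure B) : Prop :=
  ∀ r : T → ℝ, (∃ C, ∀ t, |r t| ≤ C) → ∫ x, ⨆ t, (p t x + r t) ∂μ ≤ ∫ y, ⨆ t, (q t y + r t) ∂ν

variable {μ : Measure A} {μ' : Measure A'} {ν : Measure B} {ν' : Measure B'} {p : T → A → ℝ}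
  {p' : T → A' → ℝ} {q : T → B → ℝ} {q' : T → B' → ℝ}

lemma ExpectedSupLE.trans {C : Type*} [MeasurableSpace C] {ρ : Measure C} {s : T → C → ℝ}
    (h : ExpectedSupLE p μ q ν) (h' : ExpectedSupLE q ν s ρ) : ExpectedSupLE p μ s ρ :=
  fun r hr => (h r hr).trans (h' r hr)

variable [IsProbabilityMeasure μ] [IsProbabilityMeasure μ'] [IsProbabilityMeasure ν]
  [IsProbabilityMeasure ν']

lemma HasIntegrableEnvelope.add_prod (hp : HasIntegrableEnvelope p μ)
    (hq : HasIntegrableEnvelope q ν) :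
    HasIntegrableEnvelope (fun t (z : A × B) => p t z.1 + q t z.2) (μ.prod ν) :=
  (hp.comp_measurePreserving measurePreserving_fst).add
    (hq.comp_measurePreserving measurePreserving_snd)

lemma HasIntegrableEnvelope.sum_eval {ι : Type*} [Fintype ι] {p : ι → T → A → ℝ}
    (hp : ∀ i, HasIntegrableEnvelope (p i) μ) :
    HasIntegrableEnvelope (fun t (x : ι → A) => ∑ i, p i t (x i)) (Measure.pi fun _ => μ) :=
  .sum fun i => (hp i).comp_measurePreserving (measurePreserving_eval (fun _ => μ) i)

namespace ExpectedSupLE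

variable [Countable T] [Nonempty T]

lemma prod_left (hp : HasIntegrableEnvelope p μ) (hq : HasIntegrableEnvelope q ν)
    (hp' : HasIntegrableEnvelope p' μ') (h : ExpectedSupLE p μ q ν) :
    ExpectedSupLE (fun t (z : A × A') => p t z.1 + p' t z.2) (μ.prod μ')
      (fun t (z : B × A') => q t z.1 + p' t z.2) (ν.prod μ') := by
  intro r hr
  have h_int := ((hp.add_prod hp').add (.const hr)).integrable_iSup
  have h_int' := ((hq.add_prod hp').add (.const hr)).integrable_iSup
  rw [integral_prod_symm _ h_int, integral_prod_symm _ h_int']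
  refine integral_mono h_int.integral_prod_right h_int'.integral_prod_right fun y => ?_
  simpa only [add_assoc] using h (fun t => p' t y + r t) ((hp'.add (.const hr)).exists_abs_le y)

lemma prod_right (hp : HasIntegrableEnvelope p μ) (hp' : HasIntegrableEnvelope p' μ')
    (hq' : HasIntegrableEnvelope q' ν') (h : ExpectedSupLE p' μ' q' ν') :
    ExpectedSupLE (fun t (z : A × A') => p t z.1 + p' t z.2) (μ.prod μ')
      (fun t (z : A × B') => p t z.1 + q' t z.2) (μ.prod ν') := by
  intro r hr
  have h_int := ((hp.add_prod hp').add (.const hr)).integrable_iSup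
  have h_int' := ((hp.add_prod hq').add (.const hr)).integrable_iSup
  rw [integral_prod _ h_int, integral_prod _ h_int']
  refine integral_mono h_int.integral_prod_left h_int'.integral_prod_left fun x => ?_
  simpa only [add_left_comm, add_assoc] using
    h (fun t => p t x + r t) ((hp.add (.const hr)).exists_abs_le x)

lemma prod (hp : HasIntegrableEnvelope p μ) (hq : HasIntegrableEnvelope q ν)
    (hp' : HasIntegrableEnvelope p' μ') (hq' : HasIntegrableEnvelope q' ν')
    (h : ExpectedSupLE p μ q ν) (h' : ExpectedSupLE p' μ' q' ν') :
    ExpectedSupLE (fun t (z : A × A') => p t z.1 + p' t z.2) (μ.prod μ')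
      (fun t (z : B × B') => q t z.1 + q' t z.2) (ν.prod ν') :=
  (prod_left hp hq hp' h).trans (prod_right hq hp' hq' h')

end ExpectedSupLE

theorem ExpectedSupLE.sum_pi [Countable T] [Nonempty T] {n : ℕ} {p : Fin n → T → A → ℝ}
    {q : Fin n → T → B → ℝ} (hp : ∀ i, HasIntegrableEnvelope (p i) μ)
    (hq : ∀ i, HasIntegrableEnvelope (q i) ν) (h : ∀ i, ExpectedSupLE (p i) μ (q i) ν) :
    ExpectedSupLE (fun t (x : Fin n → A) => ∑ i, p i t (x i)) (Measure.pi fun _ => μ)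
      (fun t (y : Fin n → B) => ∑ i, q i t (y i)) (Measure.pi fun _ => ν) := by
  induction n with
  | zero => intro r _; simp
  | succ n ih =>
    intro r hr
    have h_tail := ih (fun i => hp i.succ) (fun i => hq i.succ) fun i => h i.succ
    have h_cons := ExpectedSupLE.prod (hp 0) (hq 0) (.sum_eval fun i => hp (Fin.succ i))
      (.sum_eval fun i => hq (Fin.succ i)) (h 0) h_tail r hr
    simpa only [integral_pi_finSucc, Fin.sum_univ_succ, Fin.cons_zero, Fin.cons_succ] using h_cons

end ExpectedSup

section Maximum

lemma exists_abs_ciSup_le {T κ : Type*} [Finite κ] [Nonempty κ] {a : T → κ → ℝ}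
    (ha : ∃ C, ∀ t j, |a t j| ≤ C) : ∃ C, ∀ t, |⨆ j, a t j| ≤ C := by
  obtain ⟨C, hC⟩ := ha
  refine ⟨C, fun t => ?_⟩
  obtain ⟨j, hj⟩ := exists_eq_ciSup_of_finite (f := a t)
  exact hj ▸ hC t j

variable {T κ : Type*} [Fintype κ] {μ : Measure ℝ} [IsProbabilityMeasure μ]

lemma HasIntegrableEnvelope.sum_mul (hμ : Integrable id μ) {a : T → κ → ℝ}
    (ha : ∃ C, ∀ t j, |a t j| ≤ C) :
    HasIntegrableEnvelope (fun t (g : κ → ℝ) => ∑ j, g j * a t j) (Measure.pi fun _ => μ) := by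
  obtain ⟨C, hC⟩ := ha
  exact .sum fun j => .mul_const
    ((measurePreserving_eval (fun _ : κ => μ) j).integrable_comp_of_integrable hμ)
    ⟨C, fun t => hC t j⟩

lemma integral_pi_pi_uncurry {ι : Type*} [Fintype ι] (f : (ι × κ → ℝ) → ℝ) :
    ∫ G : ι → κ → ℝ, f (Function.uncurry G) ∂(Measure.pi fun _ => Measure.pi fun _ => μ) =
      ∫ g, f g ∂(Measure.pi fun _ => μ) := by
  have h_map := Measure.infinitePi_map_curry_symm fun (_ : ι) (_ : κ) => μ
  simp only [Measure.infinitePi_eq_pi] at h_map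
  rw [← h_map, integral_map_equiv]
  rfl

variable [Nonempty κ] [μ.IsNegInvariant] [Countable T] [Nonempty T]

lemma integral_iSup_evenSup_le_integral_iSup_sum_mul {a : T → κ → ℝ} {r : T → ℝ}
    (h_coord : ∀ j, HasIntegrableEnvelope (fun t u => u * a t j + r t) μ)
    (h_vec : HasIntegrableEnvelope (fun t (g : κ → ℝ) => ∑ j, g j * a t j + r t)
      (Measure.pi fun _ => μ)) :
    ∫ u, ⨆ j, evenSup (fun t => a t j) r u ∂μ ≤
      ∫ g, ⨆ t, (∑ j, g j * a t j + r t) ∂(Measure.pi fun _ : κ => μ) := by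
  classical
  have h_even (j : κ) : Integrable (evenSup (fun t => a t j) r) μ :=
    integrable_evenSup (h_coord j).integrable_iSup
  have h_even_eval (j : κ) : Integrable (fun g : κ → ℝ => evenSup (fun t => a t j) r (g j))
      (Measure.pi fun _ => μ) :=
    (measurePreserving_eval (fun _ : κ => μ) j).integrable_comp_of_integrable (h_even j)
  have h_max_int := (HasIntegrableEnvelope.of_finite h_even_eval).integrable_iSup
  have h_expect_int := integrable_expect_signs_smul h_vec.integrable_iSup
  have h_signs (g : κ → ℝ) : ⨆ j, evenSup (fun t => a t j) r (g j) ≤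
      𝔼 ε : κ → ℤˣ, ⨆ t, (∑ j, (ε • g) j * a t j + r t) :=
    ciSup_le fun j => evenSup_le_expect_signs h_vec.bddAbove j g
  calc ∫ u, ⨆ j, evenSup (fun t => a t j) r u ∂μ
      ≤ ∫ g, ⨆ j, evenSup (fun t => a t j) r (g j) ∂(Measure.pi fun _ : κ => μ) :=
        integral_iSup_le_integral_iSup_eval_of_monovary h_even fun i j =>
          monovary_evenSup (h_coord i).bddAbove (h_coord j).bddAbove
    _ ≤ ∫ g, 𝔼 ε : κ → ℤˣ, ⨆ t, (∑ j, (ε • g) j * a t j + r t) ∂(Measure.pi fun _ => μ) :=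
        integral_mono h_max_int h_expect_int h_signs
    _ = ∫ g, ⨆ t, (∑ j, g j * a t j + r t) ∂(Measure.pi fun _ => μ) :=
        integral_expect_signs_smul h_vec.integrable_iSup

theorem expectedSupLE_mul_iSup (hμ : Integrable id μ) {a : T → κ → ℝ}
    (ha : ∃ C, ∀ t j, |a t j| ≤ C) :
    ExpectedSupLE (fun t u => u * ⨆ j, a t j) μ
      (fun t (g : κ → ℝ) => ∑ j, g j * a t j) (Measure.pi fun _ => μ) := by
  intro r hr
  have h_env {b : T → ℝ} (hb : ∃ C, ∀ t, |b t| ≤ C) :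
      HasIntegrableEnvelope (fun t u => u * b t + r t) μ :=
    (HasIntegrableEnvelope.mul_const hμ hb).add (.const hr)
  have h_coord (j : κ) : HasIntegrableEnvelope (fun t u => u * a t j + r t) μ :=
    h_env (ha.imp fun _ hC t => hC t j)
  have h_max := (h_env (exists_abs_ciSup_le ha)).integrable_iSup
  calc ∫ u, ⨆ t, (u * (⨆ j, a t j) + r t) ∂μ
      = ∫ u, evenSup (fun t => ⨆ j, a t j) r u ∂μ := (integral_evenSup h_max).symm
    _ ≤ ∫ u, ⨆ j, evenSup (fun t => a t j) r u ∂μ :=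
        integral_mono (integrable_evenSup h_max)
          (HasIntegrableEnvelope.of_finite fun j =>
            integrable_evenSup (h_coord j).integrable_iSup).integrable_iSup
          (evenSup_iSup_le_iSup_evenSup fun j => (h_coord j).bddAbove)
    _ ≤ ∫ g, ⨆ t, (∑ j, g j * a t j + r t) ∂(Measure.pi fun _ => μ) :=
        integral_iSup_evenSup_le_integral_iSup_sum_mul h_coord
          ((HasIntegrableEnvelope.sum_mul hμ ha).add (.const hr))

theorem integral_iSup_sum_mul_iSup_le_of_countable {n : ℕ} (hμ : Integrable id μ)
    {a : T → Fin n → κ → ℝ} (ha : ∃ C, ∀ t i j, |a t i j| ≤ C) :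
    ∫ g, (⨆ t, ∑ i, g i * ⨆ j, a t i j) ∂(Measure.pi fun _ => μ) ≤
      ∫ g, (⨆ t, ∑ i, ∑ j, g (i, j) * a t i j) ∂(Measure.pi fun _ => μ) := by
  have ha' (i : Fin n) : ∃ C, ∀ t j, |a t i j| ≤ C := ha.imp fun _ hC t => hC t i
  have h_sum := ExpectedSupLE.sum_pi (fun i => .mul_const hμ (exists_abs_ciSup_le (ha' i)))
    (fun i => .sum_mul hμ (ha' i)) fun i => expectedSupLE_mul_iSup hμ (ha' i)
  rw [← integral_pi_pi_uncurry]
  simpa only [id_eq, add_zero, Function.uncurry_apply_pair] using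
    h_sum (fun _ => 0) ⟨0, fun _ => abs_zero.le⟩

end Maximum

section Separability

lemma exists_abs_le_of_forall_bddAbove_sum_mul {T ι : Type*} [Fintype ι] {a : T → ι → ℝ}
    (h : ∀ g : ι → ℝ, BddAbove (range fun t => ∑ i, g i * a t i)) : ∃ C, ∀ t i, |a t i| ≤ C := by
  classical
  choose C hC using h
  obtain ⟨M, hM⟩ := Finite.exists_le fun i => max (C (Pi.single i 1)) (C (Pi.single i (-1)))
  refine ⟨M, fun t i => (abs_le'.2 ⟨?_, ?_⟩).trans (hM i)⟩
  · refine le_max_of_le_left ?_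
    simpa [Pi.single_apply] using hC (Pi.single i 1) (mem_range_self t)
  · refine le_max_of_le_right ?_
    simpa [Pi.single_apply] using hC (Pi.single i (-1)) (mem_range_self t)

lemma exists_countable_forall_continuous_iSup_eq {T E : Type*} [TopologicalSpace E]
    [SecondCountableTopology E] [Nonempty T] (a : T → E) :
    ∃ S : Set T, S.Countable ∧ S.Nonempty ∧
      ∀ φ : E → ℝ, Continuous φ → ⨆ t : S, φ (a t) = ⨆ t, φ (a t) := by
  let _ : TopologicalSpace T := .induced a inferInstance
  have := TopologicalSpace.secondCountableTopology_induced T E a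
  obtain ⟨S, hS_countable, hS_dense⟩ := TopologicalSpace.exists_countable_dense T
  exact ⟨S, hS_countable, hS_dense.nonempty,
    fun φ hφ => hS_dense.ciSup' (hφ.comp continuous_induced_dom)⟩

lemma continuous_ciSup_of_finite {κ E : Type*} [TopologicalSpace E] [Finite κ] [Nonempty κ]
    {f : κ → E → ℝ} (hf : ∀ j, Continuous (f j)) : Continuous fun x => ⨆ j, f j x := by
  have := Fintype.ofFinite κ
  simp only [← Finset.sup'_univ_eq_ciSup]
  exact Continuous.finset_sup'_apply _ fun j _ => hf j

end Separability

theorem gaussian_complexity_max_le_general {T κ : Type*} [Nonempty T] [Fintype κ] [Nonempty κ]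
    {n : ℕ} {μ : Measure ℝ} [IsProbabilityMeasure μ] [μ.IsNegInvariant] (hμ : Integrable id μ)
    (a : T → Fin n → κ → ℝ)
    (h_bdd : ∀ g : Fin n × κ → ℝ, BddAbove (range fun t => ∑ i, ∑ j, g (i, j) * a t i j)) :
    ∫ g, (⨆ t, ∑ i, g i * ⨆ j, a t i j) ∂(Measure.pi fun _ => μ) ≤
      ∫ g, (⨆ t, ∑ i, ∑ j, g (i, j) * a t i j) ∂(Measure.pi fun _ => μ) := by
  obtain ⟨C, hC⟩ : ∃ C, ∀ t (k : Fin n × κ), |a t k.1 k.2| ≤ C :=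
    exists_abs_le_of_forall_bddAbove_sum_mul (by simpa only [Fintype.sum_prod_type] using h_bdd)
  obtain ⟨S, hS_countable, hS_nonempty, hS⟩ := exists_countable_forall_continuous_iSup_eq a
  have := hS_countable.to_subtype
  have := hS_nonempty.to_subtype
  have h_max (g : Fin n → ℝ) := hS (fun v => ∑ i, g i * ⨆ j, v i j) <|
    continuous_finsetSum _ fun i _ => continuous_const.mul <|
      continuous_ciSup_of_finite fun j => by fun_prop
  have h_sum (g : Fin n × κ → ℝ) := hS (fun v => ∑ i, ∑ j, g (i, j) * v i j) (by fun_prop)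
  simp only [← h_max, ← h_sum]
  exact integral_iSup_sum_mul_iSup_le_of_countable hμ ⟨C, fun t i j => hC t (i, j)⟩

instance isNegInvariant_gaussianReal_zero (v : NNReal) : (gaussianReal 0 v).IsNegInvariant :=
  ⟨gaussianReal_map_neg.trans (by rw [neg_zero])⟩

/-- **Structural result on Gaussian complexity** (Lemma 1): the Gaussian complexity of the
class induced by the maximum operator is bounded by the Gaussian complexity where every
component gets its own independent Gaussian variable. -/
theorem gaussian_complexity_max_le {X : Type*} (n c : ℕ) (hn : 1 ≤ n) (hc : 1 ≤ c)
    (x : Fin n → X) (H : Set (X → Fin c → ℝ)) (hHcount : H.Countable) (hHne : H.Nonempty)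
    (hbdd₁ : ∀ g : Fin n → ℝ,
      BddAbove (Set.range fun h : H => ∑ i, g i * ⨆ j, (h : X → Fin c → ℝ) (x i) j))
    (hbdd₂ : ∀ g : Fin n × Fin c → ℝ,
      BddAbove (Set.range fun h : H => ∑ i, ∑ j, g (i, j) * (h : X → Fin c → ℝ) (x i) j))
    (hint₁ : Integrable
      (fun g : Fin n → ℝ => ⨆ h : H, ∑ i, g i * ⨆ j, (h : X → Fin c → ℝ) (x i) j)
      (Measure.pi fun _ : Fin n => gaussianReal 0 1))
    (hint₂ : Integrable
      (fun g : Fin n × Fin c → ℝ => ⨆ h : H, ∑ i, ∑ j, g (i, j) * (h : X → Fin c → ℝ) (x i) j)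
      (Measure.pi fun _ : Fin n × Fin c => gaussianReal 0 1)) :
    (∫ g : Fin n → ℝ, (⨆ h : H, ∑ i, g i * ⨆ j, (h : X → Fin c → ℝ) (x i) j)
        ∂(Measure.pi fun _ : Fin n => gaussianReal 0 1)) ≤
    ∫ g : Fin n × Fin c → ℝ, (⨆ h : H, ∑ i, ∑ j, g (i, j) * (h : X → Fin c → ℝ) (x i) j)
        ∂(Measure.pi fun _ : Fin n × Fin c => gaussianReal 0 1) := by
  have : Nonempty H := hHne.to_subtype
  have : Nonempty (Fin c) := Fin.pos_iff_nonempty.1 hc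
  exact gaussian_complexity_max_le_general ((memLp_id_gaussianReal 1).integrable le_rfl)
    (fun (h : H) i j => (h : X → Fin c → ℝ) (x i) j) hbdd₂
end

section
/- Let c ≥ 2, n ≥ 1, let X be a measurable space, E a real Hilbert space, φ : X → E a measurable feature map with kernel k(x,x) = ‖φ(x)‖², and let 1 ≤ p ≤ 2 and Λ > 0. Let H_{p,Λ} = {h^w : x ↦ (⟨w_1,φ(x)⟩,…,⟨w_c,φ(x)⟩) : w ∈ E^c, ‖w‖_{2,p} ≤ Λ}. Let ℓ be an L-regular loss with B_ℓ := sup_{(x,y),h∈H_{p,Λ}} ℓ(ρ_h(x,y)) finite, and assume the relevant suprema are measurable (e.g., taken over a countable dense family) and integrable. Then for every δ ∈ (0,1), with P^⊗n-probability at least 1 − δ over the sample ((x_1,y_1),…,(x_n,y_n)), every w with ‖w‖_{2,p} ≤ Λ satisfies R(h^w) ≤ (1/n) Σ_{i=1}^n ℓ(ρ_{h^w}(x_i,y_i)) + 3 B_ℓ √(log(2/δ)/(2n)) + (2LΛ/n) √(Σ_{i=1}^n k(x_i,x_i)) · K, where K = √e · (4 log c)^{1 + 1/(2 log c)} if p ≤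 (2 log c)/(2 log c − 1), and K = (2p/(p−1))^{2 − 1/p} · c^{(p−1)/p} if (2 log c)/(2 log c − 1) < p ≤ 2. -/
open MeasureTheory ProbabilityTheory Real RealInnerProductSpace

/-- The multi-class margin `ρ_h(x, y) = h_y(x) - max_{y' ≠ y} h_{y'}(x)`. -/
noncomputable def mcMargin {X : Type*} {c : ℕ} (h : X → Fin c → ℝ) (x : X) (y : Fin c) : ℝ :=
  h x y - ⨆ y' : {y' : Fin c // y' ≠ y}, h x y'.1

/-- The `ℓ_{2,p}` block norm `‖w‖_{2,p} = (Σ_j ‖w_j‖^p)^{1/p}` on `E^c`. -/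
noncomputable def norm2p {E : Type*} [NormedAddCommGroup E] {c : ℕ}
    (p : ℝ) (w : Fin c → E) : ℝ :=
  (∑ j, ‖w j‖ ^ p) ^ (1 / p)

/-!
Suppose first that the weights range over a separable set. Then countably many hypotheses decide the
supremum of the deviation between expected and empirical loss, and McDiarmid's inequality, applied
to that supremum and to its Rademacher average, together with symmetrization bounds the expected
loss by the empirical one, `3 B √(log (2 / δ) / (2 n))` and twice the empirical Rademacher average.
The margin loss varies by at most `2 L 𝔼_ε |∑ j, ε j ⟪w j - w' j, φ x⟫|` between two weights,
because a mean over random signs dominates each single term; so contraction replaces it by the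
linear process `∑ i j, ε i j ⟪w j, φ (x i)⟫`. Hölder duality between the norms `‖·‖_{2,r}` and
`‖·‖_{2,q}`, followed by Khintchine's inequality, bounds its supremum on average by
`Λ c ^ (1 / q) √q √(∑ i, ‖φ (x i)‖²)`; take `r = p` or, for small `p`, `q = 2 log c`.

If `E` is not separable, choose a closed separable `V` such that every vector of `Vᗮ` is orthogonal
to `φ x` almost surely. Projecting `w` to `V` does not change the risk, and the residuals of the
sampled features are almost surely pairwise orthogonal, so by Bessel's inequality the empirical loss
changes by at most `(2 L Λ / n) √(∑ i, ‖φ (x i)‖²)`. The slack in the constant `K` pays for this.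
-/

open scoped BigOperators NNReal ENNReal

section BoundedDifferences

theorem exists_forall_mem_Icc_of_abs_sub_le {α : Type*} [Nonempty α] {g : α → ℝ} {a : ℝ}
    (hg : ∀ x y, |g x - g y| ≤ a) : ∃ m, ∀ x, g x ∈ Set.Icc m (m + a) := by
  inhabit α
  have hbdd : BddBelow (Set.range g) := by
    refine ⟨g default - a, ?_⟩
    rintro _ ⟨x, rfl⟩
    linarith [(abs_le.1 (hg default x)).2]
  refine ⟨⨅ x, g x, fun x => ⟨ciInf_le hbdd x, ?_⟩⟩
  have hle : g x - a ≤ ⨅ y, g y := le_ciInf fun y => by linarith [(abs_le.1 (hg x y)).2]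
  linarith

variable {Ω : Type*} [MeasurableSpace Ω] {μ : Measure Ω} [IsProbabilityMeasure μ]

theorem integrable_of_abs_sub_le {g : Ω → ℝ} (hgm : AEMeasurable g μ) {a : ℝ}
    (hg : ∀ x y, |g x - g y| ≤ a) : Integrable g μ := by
  have : Nonempty Ω := μ.nonempty_of_neZero
  obtain ⟨m, hm⟩ := exists_forall_mem_Icc_of_abs_sub_le hg
  exact Integrable.of_mem_Icc m (m + a) hgm (ae_of_all _ hm)

theorem hasSubgaussianMGF_of_abs_sub_le {g : Ω → ℝ} (hgm : AEMeasurable g μ) {a : ℝ≥0}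
    (hg : ∀ x y, |g x - g y| ≤ a) :
    HasSubgaussianMGF (fun x => g x - ∫ y, g y ∂μ) (a ^ 2 / 4) μ := by
  have : Nonempty Ω := μ.nonempty_of_neZero
  obtain ⟨m, hm⟩ := exists_forall_mem_Icc_of_abs_sub_le hg
  have ha : (‖m + a - m‖₊ / 2) ^ 2 = a ^ 2 / 4 := by
    rw [add_sub_cancel_left, NNReal.nnnorm_eq, div_pow]
    norm_num
  exact ha ▸ hasSubgaussianMGF_of_mem_Icc hgm (ae_of_all _ hm)

theorem hasSubgaussianMGF_prod {α β : Type*} [MeasurableSpace α] [MeasurableSpace β]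
    {μ : Measure α} {ν : Measure β} [SFinite μ] [SFinite ν] {f : α × β → ℝ} {g : α → ℝ}
    {c₁ c₂ : ℝ≥0} (hf : AEStronglyMeasurable f (μ.prod ν)) (hg : HasSubgaussianMGF g c₁ μ)
    (hfg : ∀ x, HasSubgaussianMGF (fun y => f (x, y) - g x) c₂ ν) :
    HasSubgaussianMGF f (c₁ + c₂) (μ.prod ν) := by
  have hfactor (t : ℝ) (x : α) (y : β) :
      exp (t * f (x, y)) = exp (t * (f (x, y) - g x)) * exp (t * g x) := by
    rw [← exp_add]
    ring_nf
  have hinner_integrable (t : ℝ) (x : α) : Integrable (fun y => exp (t * f (x, y))) ν := by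
    simpa only [hfactor] using ((hfg x).integrable_exp_mul t).mul_const _
  have hinner_le (t : ℝ) (x : α) :
      ∫ y, exp (t * f (x, y)) ∂ν ≤ exp (c₂ * t ^ 2 / 2) * exp (t * g x) := by
    simp only [hfactor, integral_mul_const]
    exact mul_le_mul_of_nonneg_right ((hfg x).mgf_le t) (exp_pos _).le
  have hbound (t : ℝ) : Integrable (fun x => exp (c₂ * t ^ 2 / 2) * exp (t * g x)) μ :=
    (hg.integrable_exp_mul t).const_mul _
  have hmeas (t : ℝ) : AEStronglyMeasurable (fun q => exp (t * f q)) (μ.prod ν) :=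
    continuous_exp.comp_aestronglyMeasurable (hf.const_mul t)
  have hintegrable (t : ℝ) : Integrable (fun q => exp (t * f q)) (μ.prod ν) := by
    refine (integrable_prod_iff (hmeas t)).2 ⟨ae_of_all _ (hinner_integrable t), ?_⟩
    refine (hbound t).mono' (hmeas t).norm.integral_prod_right' (ae_of_all _ fun x => ?_)
    simp only [norm_eq_abs, abs_exp]
    exact (abs_of_nonneg (integral_nonneg fun y => (exp_pos (t * f (x, y))).le)).trans_le
      (hinner_le t x)
  refine ⟨hintegrable, fun t => ?_⟩
  calc mgf f (μ.prod ν) t = ∫ x, ∫ y, exp (t * f (x, y)) ∂ν ∂μ := integral_prod _ (hintegrable t)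
    _ ≤ ∫ x, exp (c₂ * t ^ 2 / 2) * exp (t * g x) ∂μ :=
        integral_mono (hintegrable t).integral_prod_left (hbound t) (hinner_le t)
    _ = exp (c₂ * t ^ 2 / 2) * mgf g μ t := integral_const_mul _ _
    _ ≤ exp (c₂ * t ^ 2 / 2) * exp (c₁ * t ^ 2 / 2) := by
        gcongr
        exact hg.mgf_le t
    _ = exp (↑(c₁ + c₂) * t ^ 2 / 2) := by
        rw [← exp_add]
        push_cast
        ring_nf

section FinCons

variable {n : ℕ} {Z : Fin (n + 1) → Type*} [∀ i, MeasurableSpace (Z i)]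

theorem measurable_finCons :
    Measurable fun q : Z 0 × (∀ i : Fin n, Z i.succ) => (Fin.cons q.1 q.2 : ∀ i, Z i) := by
  refine measurable_pi_iff.2 (Fin.cases ?_ fun i => ?_)
  · simpa only [Fin.cons_zero] using measurable_fst
  · simpa only [Fin.cons_succ] using! (measurable_pi_apply i).comp measurable_snd

theorem measurePreserving_head_tail (P : ∀ i, Measure (Z i)) [∀ i, SigmaFinite (P i)] :
    MeasurePreserving (fun S : ∀ i, Z i => (S 0, Fin.tail S)) (Measure.pi P)
      ((P 0).prod (Measure.pi fun i : Fin n => P i.succ)) :=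
  measurePreserving_piFinSuccAbove P 0

end FinCons

/-- Changing the `i`-th argument of `f` changes its value by at most `a i`. This is the hypothesis
of McDiarmid's inequality. -/
def HasBoundedDifferences {n : ℕ} {Z : Fin n → Type*} (f : (∀ i, Z i) → ℝ) (a : Fin n → ℝ≥0) :
    Prop :=
  ∀ S i z, |f (Function.update S i z) - f S| ≤ a i

namespace HasBoundedDifferences

section Basic

variable {n : ℕ} {Z : Fin n → Type*} {f g : (∀ i, Z i) → ℝ} {a b : Fin n → ℝ≥0}

theorem sub (hf : HasBoundedDifferences f a) (hg : HasBoundedDifferences g b) :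
    HasBoundedDifferences (fun S => f S - g S) (a + b) := fun S i z => by
  rw [sub_sub_sub_comm]
  exact (abs_sub _ _).trans (add_le_add (hf S i z) (hg S i z))

theorem const_mul (r : ℝ≥0) (hf : HasBoundedDifferences f a) :
    HasBoundedDifferences (fun S => r * f S) (fun i => r * a i) := fun S i z => by
  rw [← mul_sub, abs_mul, NNReal.abs_eq, NNReal.coe_mul]
  exact mul_le_mul_of_nonneg_left (hf S i z) r.2

end Basic

section Cons

variable {n : ℕ} {Z : Fin (n + 1) → Type*} {f : (∀ i, Z i) → ℝ} {a : Fin (n + 1) → ℝ≥0}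

theorem comp_cons (hf : HasBoundedDifferences f a) (z : Z 0) :
    HasBoundedDifferences (fun U => f (Fin.cons z U)) (Fin.tail a) := fun U i z' => by
  simpa only [Fin.cons_update, Fin.tail] using hf (Fin.cons z U) i.succ z'

theorem abs_cons_sub_cons_le (hf : HasBoundedDifferences f a) (z z' : Z 0)
    (U : ∀ i : Fin n, Z i.succ) : |f (Fin.cons z U) - f (Fin.cons z' U)| ≤ a 0 := by
  simpa only [Fin.update_cons_zero] using hf (Fin.cons z' U) 0 z

end Cons

theorem abs_sub_le_sum {n : ℕ} {Z : Fin n → Type*} {f : (∀ i, Z i) → ℝ} {a : Fin n → ℝ≥0}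
    (hf : HasBoundedDifferences f a) (S T : ∀ i, Z i) : |f S - f T| ≤ ↑(∑ i, a i) := by
  induction n with
  | zero => simp [Subsingleton.elim S T]
  | succ n ih =>
    have htail := ih (hf.comp_cons (S 0)) (Fin.tail S) (Fin.tail T)
    have hhead := hf.abs_cons_sub_cons_le (S 0) (T 0) (Fin.tail T)
    simp only [Fin.cons_self_tail] at htail hhead
    rw [Fin.sum_univ_succ, NNReal.coe_add]
    exact (abs_sub_le _ (f (Fin.cons (S 0) (Fin.tail T))) _).trans
      (add_comm (a 0 : ℝ) _ ▸ add_le_add htail hhead)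

theorem integrable {n : ℕ} {Z : Fin n → Type*} [∀ i, MeasurableSpace (Z i)]
    {μ : Measure (∀ i, Z i)} [IsProbabilityMeasure μ] {f : (∀ i, Z i) → ℝ} {a : Fin n → ℝ≥0}
    (hf : HasBoundedDifferences f a) (hfm : Measurable f) : Integrable f μ :=
  integrable_of_abs_sub_le hfm.aemeasurable hf.abs_sub_le_sum

theorem hasSubgaussianMGF {n : ℕ} {Z : Fin n → Type*} [∀ i, MeasurableSpace (Z i)]
    {P : ∀ i, Measure (Z i)} [∀ i, IsProbabilityMeasure (P i)] {f : (∀ i, Z i) → ℝ}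
    {a : Fin n → ℝ≥0} (hf : HasBoundedDifferences f a) (hfm : Measurable f) :
    HasSubgaussianMGF (fun S => f S - ∫ T, f T ∂Measure.pi P) ((∑ i, a i ^ 2) / 4)
      (Measure.pi P) := by
  induction n with
  | zero =>
    have hconst (S : ∀ i, Z i) : f S = f default := by rw [Subsingleton.elim S default]
    simp [hconst]
  | succ n ih =>
    let ν := Measure.pi fun i : Fin n => P i.succ
    have hsplit := measurePreserving_head_tail P
    have hcons : Measurable fun q : Z 0 × (∀ i : Fin n, Z i.succ) => f (Fin.cons q.1 q.2) :=
      hfm.comp measurable_finCons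
    let g : Z 0 → ℝ := fun z => ∫ U, f (Fin.cons z U) ∂ν
    have hgm : Measurable g := hcons.stronglyMeasurable.integral_prod_right.measurable
    have hslice (z : Z 0) : Integrable (fun U => f (Fin.cons z U)) ν :=
      (hf.comp_cons z).integrable (hcons.comp measurable_prodMk_left)
    have hg (z z' : Z 0) : |g z - g z'| ≤ a 0 := by
      rw [← integral_sub (hslice z) (hslice z'), ← norm_eq_abs]
      refine (norm_integral_le_of_norm_le_const (C := a 0) (ae_of_all _ fun U => ?_)).trans_eq ?_
      · exact hf.abs_cons_sub_cons_le z z' U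
      · simp [ν]
    have hmean : ∫ T, f T ∂Measure.pi P = ∫ z, g z ∂P 0 := by
      rw [← integral_prod _ (integrable_of_abs_sub_le hcons.aemeasurable
        fun q q' => hf.abs_sub_le_sum _ _), ← hsplit.map_eq,
        integral_map hsplit.aemeasurable hcons.aestronglyMeasurable]
      simp only [Fin.cons_self_tail]
    have hprod : HasSubgaussianMGF (fun q => f (Fin.cons q.1 q.2) - ∫ z, g z ∂P 0)
        (a 0 ^ 2 / 4 + (∑ i : Fin n, a i.succ ^ 2) / 4) ((P 0).prod ν) := by
      refine hasSubgaussianMGF_prod (hcons.sub_const _).aestronglyMeasurable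
        (hasSubgaussianMGF_of_abs_sub_le hgm.aemeasurable hg) fun z => ?_
      simpa only [sub_sub_sub_cancel_right] using!
        ih (P := fun i : Fin n => P i.succ) (hf.comp_cons z) (hcons.comp measurable_prodMk_left)
    rw [← hsplit.map_eq] at hprod
    rw [Fin.sum_univ_succ, add_div, hmean]
    simpa only [Function.comp_def, Fin.cons_self_tail] using
      HasSubgaussianMGF.of_map hsplit.aemeasurable hprod

theorem measure_ge_le {n : ℕ} {Z : Fin n → Type*} [∀ i, MeasurableSpace (Z i)]
    {P : ∀ i, Measure (Z i)} [∀ i, IsProbabilityMeasure (P i)] {f : (∀ i, Z i) → ℝ}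
    {a : Fin n → ℝ≥0} (hf : HasBoundedDifferences f a) (hfm : Measurable f) {ε : ℝ} (hε : 0 ≤ ε) :
    (Measure.pi P).real {S | ε ≤ f S - ∫ T, f T ∂Measure.pi P} ≤
      exp (-(2 * ε ^ 2) / ∑ i, (a i : ℝ) ^ 2) := by
  convert (hf.hasSubgaussianMGF hfm).measure_ge_le hε using 2
  · push_cast
    rw [show (2 : ℝ) * ((∑ i, (a i : ℝ) ^ 2) / 4) = (∑ i, (a i : ℝ) ^ 2) / 2 by ring,
      div_div_eq_mul_div]
    ring
  · infer_instance

end HasBoundedDifferences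

end BoundedDifferences

section Signs

theorem abs_units_smul (u : ℤˣ) (x : ℝ) : |u • x| = |x| :=
  norm_units_zsmul u x

theorem expect_units_int (f : ℤˣ → ℝ) : 𝔼 u, f u = (f 1 + f (-1)) / 2 := by
  rw [Fintype.expect_eq_sum_div_card, UnitsInt.univ, Finset.sum_pair (by decide)]
  simp

end Signs

section Suprema

variable {T : Type*} [Finite T] [Nonempty T]

theorem abs_ciSup_sub_ciSup_le {u v : T → ℝ} {a : ℝ} (h : ∀ t, |u t - v t| ≤ a) :
    |(⨆ t, u t) - ⨆ t, v t| ≤ a := by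
  have hle {u v : T → ℝ} (h : ∀ t, |u t - v t| ≤ a) : (⨆ t, u t) - ⨆ t, v t ≤ a := by
    refine sub_le_iff_le_add.2 (ciSup_le fun t => ?_)
    linarith [(abs_le.1 (h t)).2, Finite.le_ciSup v t]
  exact abs_sub_le_iff.2 ⟨hle h, hle fun t => abs_sub_comm (u t) (v t) ▸ h t⟩

variable {Ω : Type*} [MeasurableSpace Ω] {μ : Measure Ω}

theorem integrable_ciSup {X : T → Ω → ℝ} (hX : ∀ t, Integrable (X t) μ) :
    Integrable (fun ω => ⨆ t, X t ω) μ := by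
  cases nonempty_fintype T
  refine (integrable_finsetSum Finset.univ fun t _ => (hX t).abs).mono'
    (AEMeasurable.iSup fun t => (hX t).aemeasurable).aestronglyMeasurable (ae_of_all _ fun ω => ?_)
  obtain ⟨t, ht⟩ := exists_eq_ciSup_of_finite (f := fun t => X t ω)
  rw [← ht, norm_eq_abs]
  exact Finset.single_le_sum (f := fun t => |X t ω|) (fun _ _ => abs_nonneg _) (Finset.mem_univ t)

theorem integral_ciSup_integral_sub_le [IsProbabilityMeasure μ] {X : T → Ω → ℝ}
    (hX : ∀ t, Integrable (X t) μ) :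
    ∫ ω, ⨆ t, (∫ ω', X t ω' ∂μ - X t ω) ∂μ ≤ ∫ q : Ω × Ω, ⨆ t, (X t q.2 - X t q.1) ∂μ.prod μ := by
  have hdiff (t : T) : Integrable (fun q : Ω × Ω => X t q.2 - X t q.1) (μ.prod μ) :=
    ((hX t).comp_snd μ).sub ((hX t).comp_fst μ)
  have hslice (ω : Ω) (t : T) : Integrable (fun ω' => X t ω' - X t ω) μ :=
    (hX t).sub (integrable_const _)
  rw [integral_prod _ (integrable_ciSup hdiff)]
  refine integral_mono (integrable_ciSup fun t => (integrable_const _).sub (hX t))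
    (integrable_ciSup hdiff).integral_prod_left fun ω => ciSup_le fun t => ?_
  calc ∫ ω', X t ω' ∂μ - X t ω = ∫ ω', (X t ω' - X t ω) ∂μ := by
        simp [integral_sub (hX t) (integrable_const _)]
    _ ≤ ∫ ω', ⨆ s, (X s ω' - X s ω) ∂μ :=
        integral_mono (hslice ω t) (integrable_ciSup (hslice ω)) fun ω' =>
          Finite.le_ciSup (fun s => X s ω' - X s ω) t

end Suprema

section Rademacher

/-- The unnormalised empirical Rademacher complexity of the family `F` on the sample `S`: the mean
over uniform random signs `σ` of the largest correlation of `σ` with a member of `F`. The usual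
complexity is this divided by the sample size. Signs are elements of `ℤˣ`. -/
noncomputable def rademacherSum {T Z ι : Type*} [Fintype ι] [DecidableEq ι] (F : T → Z → ℝ)
    (S : ι → Z) : ℝ :=
  𝔼 σ : ι → ℤˣ, ⨆ t, ∑ i, σ i • F t (S i)

variable {T Z ι : Type*} [Finite T] [Nonempty T] [Fintype ι] [MeasurableSpace Z]
  {P : Measure Z} [IsProbabilityMeasure P] {F : T → Z → ℝ}

theorem integrable_sum_units_smul {f : Z → ℝ} (hf : Integrable f P) (σ : ι → ℤˣ) :
    Integrable (fun S : ι → Z => ∑ i, σ i • f (S i)) (Measure.pi fun _ => P) := by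
  refine integrable_finsetSum _ fun i _ => ?_
  have hi := integrable_comp_eval (μ := fun _ : ι => P) (i := i) hf
  rcases Int.units_eq_one_or (σ i) with h | h
  · simpa only [h, one_smul] using hi
  · simpa only [h, Units.neg_smul, one_smul] using! hi.neg

theorem integral_ciSup_sum_sub_eq_units_smul (hF : ∀ t, Integrable (F t) P) (σ : ι → ℤˣ) :
    ∫ ω : ι → Z × Z, ⨆ t, ∑ i, (F t (ω i).2 - F t (ω i).1) ∂Measure.pi (fun _ => P.prod P) =
      ∫ ω : ι → Z × Z, ⨆ t, ∑ i, σ i • (F t (ω i).2 - F t (ω i).1)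
        ∂Measure.pi (fun _ => P.prod P) := by
  let swap : (ι → Z × Z) → ι → Z × Z := fun ω i => if σ i = 1 then ω i else (ω i).swap
  have hswap : MeasurePreserving swap (Measure.pi fun _ => P.prod P)
      (Measure.pi fun _ => P.prod P) := by
    refine measurePreserving_pi (fun _ : ι => P.prod P) (fun _ => P.prod P)
      (f := fun i z => if σ i = 1 then z else z.swap) fun i => ?_
    by_cases h : σ i = 1
    · simpa only [h, if_true] using! MeasurePreserving.id (P.prod P)
    · simpa only [h, if_false] using Measure.measurePreserving_swap
  have hint : Integrable (fun ω : ι → Z × Z => ⨆ t, ∑ i, (F t (ω i).2 - F t (ω i).1))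
      (Measure.pi fun _ => P.prod P) :=
    integrable_ciSup fun t => integrable_finsetSum _ fun i _ =>
      integrable_comp_eval (μ := fun _ : ι => P.prod P) (i := i)
        (((hF t).comp_snd P).sub ((hF t).comp_fst P))
  conv_lhs => rw [← hswap.map_eq]
  rw [integral_map hswap.aemeasurable (by rw [hswap.map_eq]; exact hint.aestronglyMeasurable)]
  refine integral_congr_ae (ae_of_all _ fun ω => iSup_congr fun t =>
    Finset.sum_congr rfl fun i _ => ?_)
  rcases Int.units_eq_one_or (σ i) with h | h <;> simp [swap, h]

theorem integral_ciSup_sum_sub_le (hF : ∀ t, Integrable (F t) P) (σ : ι → ℤˣ) :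
    ∫ q : (ι → Z) × (ι → Z), ⨆ t, (∑ i, F t (q.2 i) - ∑ i, F t (q.1 i))
        ∂(Measure.pi fun _ => P).prod (Measure.pi fun _ => P) ≤
      ∫ S, ⨆ t, ∑ i, σ i • F t (S i) ∂Measure.pi (fun _ => P) +
        ∫ S, ⨆ t, ∑ i, (-σ) i • F t (S i) ∂Measure.pi (fun _ => P) := by
  let μ := Measure.pi fun _ : ι => P
  have he := measurePreserving_arrowProdEquivProdArrow Z Z ι (fun _ => P) (fun _ => P)
  have hsigned (σ : ι → ℤˣ) : Integrable (fun S : ι → Z => ⨆ t, ∑ i, σ i • F t (S i)) μ :=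
    integrable_ciSup fun t => integrable_sum_units_smul (hF t) σ
  have hsnd := (hsigned σ).comp_snd μ
  have hfst := (hsigned (-σ)).comp_fst μ
  calc ∫ q : (ι → Z) × (ι → Z), ⨆ t, (∑ i, F t (q.2 i) - ∑ i, F t (q.1 i)) ∂μ.prod μ
      = ∫ ω : ι → Z × Z, ⨆ t, ∑ i, (F t (ω i).2 - F t (ω i).1)
          ∂Measure.pi (fun _ => P.prod P) := by
        rw [← he.integral_comp']
        simp only [Finset.sum_sub_distrib]
        rfl
    _ = ∫ ω : ι → Z × Z, ⨆ t, ∑ i, σ i • (F t (ω i).2 - F t (ω i).1)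
          ∂Measure.pi (fun _ => P.prod P) := integral_ciSup_sum_sub_eq_units_smul hF σ
    _ = ∫ q : (ι → Z) × (ι → Z), ⨆ t, (∑ i, σ i • F t (q.2 i) + ∑ i, (-σ) i • F t (q.1 i))
          ∂μ.prod μ := by
        rw [← he.integral_comp']
        simp only [Pi.neg_apply, Units.neg_smul, smul_sub, Finset.sum_sub_distrib,
          Finset.sum_neg_distrib, ← sub_eq_add_neg]
        rfl
    _ ≤ ∫ q : (ι → Z) × (ι → Z), ((⨆ t, ∑ i, σ i • F t (q.2 i)) +
          ⨆ t, ∑ i, (-σ) i • F t (q.1 i)) ∂μ.prod μ := by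
        refine integral_mono (integrable_ciSup fun t => ?_) (hsnd.add hfst) fun q =>
          ciSup_le fun t => add_le_add (Finite.le_ciSup (fun t => ∑ i, σ i • F t (q.2 i)) t)
            (Finite.le_ciSup (fun t => ∑ i, (-σ) i • F t (q.1 i)) t)
        exact ((integrable_sum_units_smul (hF t) σ).comp_snd μ).add
          ((integrable_sum_units_smul (hF t) (-σ)).comp_fst μ)
    _ = _ := by
        rw [integral_add hsnd hfst,
          integral_fun_snd (μ := μ) (ν := μ) (fun S : ι → Z => ⨆ t, ∑ i, σ i • F t (S i)),
          integral_fun_fst (μ := μ) (ν := μ) (fun S : ι → Z => ⨆ t, ∑ i, (-σ) i • F t (S i))]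
        simp [μ]

theorem integral_ciSup_integral_sub_sum_le_rademacherSum [DecidableEq ι]
    (hF : ∀ t, Integrable (F t) P) :
    ∫ S : ι → Z, ⨆ t, (Fintype.card ι * ∫ z, F t z ∂P - ∑ i, F t (S i)) ∂Measure.pi (fun _ => P) ≤
      2 * ∫ S : ι → Z, rademacherSum F S ∂Measure.pi (fun _ => P) := by
  let μ := Measure.pi fun _ : ι => P
  let A : (ι → ℤˣ) → ℝ := fun σ => ∫ S, ⨆ t, ∑ i, σ i • F t (S i) ∂μ
  have heval (t : T) (i : ι) : Integrable (fun S : ι → Z => F t (S i)) μ :=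
    integrable_comp_eval (hF t)
  have hmean (t : T) : ∫ S : ι → Z, ∑ i, F t (S i) ∂μ = Fintype.card ι * ∫ z, F t z ∂P := by
    rw [integral_finsetSum _ fun i _ => heval t i]
    simp [μ, integral_comp_eval (μ := fun _ : ι => P) (hF t).aestronglyMeasurable]
  have hrad : ∫ S : ι → Z, rademacherSum F S ∂μ = 𝔼 σ, A σ := by
    simp only [rademacherSum, Fintype.expect_eq_sum_div_card, A]
    rw [integral_div, integral_finsetSum _ fun σ _ =>
      integrable_ciSup fun t => integrable_sum_units_smul (hF t) σ]
  calc ∫ S : ι → Z, ⨆ t, (Fintype.card ι * ∫ z, F t z ∂P - ∑ i, F t (S i)) ∂μ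
      ≤ ∫ q : (ι → Z) × (ι → Z), ⨆ t, (∑ i, F t (q.2 i) - ∑ i, F t (q.1 i)) ∂μ.prod μ := by
        simp only [← hmean]
        exact integral_ciSup_integral_sub_le fun t => integrable_finsetSum _ fun i _ => heval t i
    _ ≤ 𝔼 σ, (A σ + A (-σ)) :=
        Finset.le_expect Finset.univ_nonempty fun σ _ => integral_ciSup_sum_sub_le hF σ
    _ = 2 * ∫ S : ι → Z, rademacherSum F S ∂μ := by
        rw [Finset.expect_add_distrib,
          Fintype.expect_equiv (Equiv.neg _) (fun σ => A (-σ)) A fun _ => rfl, hrad, two_mul]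

end Rademacher

section FiniteClass

theorem sum_update_sub_sum {n : ℕ} {Z : Fin n → Type*} (f : ∀ i, Z i → ℝ) (S : ∀ i, Z i)
    (k : Fin n) (z : Z k) :
    ∑ i, f i (Function.update S k z i) - ∑ i, f i (S i) = f k z - f k (S k) := by
  rw [← Finset.sum_sub_distrib, Finset.sum_eq_single k]
  · simp
  · intro i _ hi
    simp [Function.update_of_ne hi]
  · simp

theorem hasBoundedDifferences_ciSup_add_sum {T : Type*} [Finite T] [Nonempty T] {n : ℕ}
    {Z : Fin n → Type*} {f : T → ∀ i, Z i → ℝ} {a : Fin n → ℝ≥0}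
    (hf : ∀ t i z z', |f t i z - f t i z'| ≤ a i) (r : T → ℝ) :
    HasBoundedDifferences (fun S => ⨆ t, (r t + ∑ i, f t i (S i))) a := fun S i z => by
  refine abs_ciSup_sub_ciSup_le fun t => ?_
  rw [add_sub_add_left_eq_sub, sum_update_sub_sum]
  exact hf t i z (S i)

variable {T Z : Type*} {n : ℕ} {F : T → Z → ℝ} {B : ℝ≥0}

theorem hasBoundedDifferences_rademacherSum [Finite T] [Nonempty T]
    (hF : ∀ t z z', |F t z - F t z'| ≤ B) :
    HasBoundedDifferences (fun S : Fin n → Z => rademacherSum F S) fun _ => B := fun S i z => by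
  simp only [rademacherSum, ← Finset.expect_sub_distrib]
  refine (Finset.abs_expect_le _ _).trans (Finset.expect_le Finset.univ_nonempty fun σ _ => ?_)
  have hσ : HasBoundedDifferences (fun S : Fin n → Z => ⨆ t, (0 + ∑ i, σ i • F t (S i)))
      fun _ => B :=
    hasBoundedDifferences_ciSup_add_sum (f := fun t i z => σ i • F t z)
      (fun t i z z' => by rw [← smul_sub, abs_units_smul]; exact hF t z z') fun _ => 0
  simpa only [zero_add] using hσ S i z

variable [MeasurableSpace Z]

theorem measurable_sum_comp_eval {f : Fin n → Z → ℝ} (hf : ∀ i, Measurable (f i)) :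
    Measurable fun S : Fin n → Z => ∑ i, f i (S i) :=
  Finset.measurable_sum _ fun i _ => (hf i).comp (measurable_pi_apply i)

theorem measurable_rademacherSum [Countable T] (hF : ∀ t, Measurable (F t)) :
    Measurable fun S : Fin n → Z => rademacherSum F S := by
  simp only [rademacherSum, Fintype.expect_eq_sum_div_card]
  refine (Finset.measurable_sum _ fun σ _ => Measurable.iSup fun t => ?_).div_const _
  exact measurable_sum_comp_eval fun i => (hF t).const_smul (σ i)

variable [Finite T] {P : Measure Z} [IsProbabilityMeasure P]

theorem measureReal_le_ciSup_sub_rademacherSum_le [Nonempty T] (hFm : ∀ t, Measurable (F t))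
    (hF : ∀ t z, F t z ∈ Set.Icc 0 (B : ℝ)) {τ : ℝ} (hτ : 0 ≤ τ) :
    (Measure.pi fun _ : Fin n => P).real {S | τ ≤
      (⨆ t, (n * ∫ z, F t z ∂P + ∑ i, -F t (S i))) - 2 * rademacherSum F S} ≤
      exp (-(2 * τ ^ 2) / (n * (3 * B) ^ 2)) := by
  let μ := Measure.pi fun _ : Fin n => P
  let Φ : (Fin n → Z) → ℝ := fun S => ⨆ t, (n * ∫ z, F t z ∂P + ∑ i, -F t (S i))
  let f : (Fin n → Z) → ℝ := fun S => Φ S - 2 * rademacherSum F S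
  have hosc (t : T) (z z' : Z) : |F t z - F t z'| ≤ B := by
    simpa using abs_sub_le_of_le_of_le (hF t z).1 (hF t z).2 (hF t z').1 (hF t z').2
  have hΦd : HasBoundedDifferences Φ fun _ => B :=
    hasBoundedDifferences_ciSup_add_sum (f := fun t _ z => -F t z)
      (fun t _ z z' => by rw [neg_sub_neg]; exact hosc t z' z) _
  have hRd : HasBoundedDifferences (fun S : Fin n → Z => rademacherSum F S) fun _ => B :=
    hasBoundedDifferences_rademacherSum hosc
  have hfd : HasBoundedDifferences f fun _ => B + 2 * B := hΦd.sub (hRd.const_mul 2)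
  have hΦm : Measurable Φ := Measurable.iSup fun t =>
    (measurable_sum_comp_eval fun _ => (hFm t).neg).const_add _
  have hRm := measurable_rademacherSum (n := n) hFm
  have hmean : ∫ S, f S ∂μ ≤ 0 := by
    have hsymm := integral_ciSup_integral_sub_sum_le_rademacherSum (ι := Fin n) (P := P) fun t =>
      Integrable.of_mem_Icc 0 B (hFm t).aemeasurable (ae_of_all _ (hF t))
    rw [integral_sub (hΦd.integrable hΦm) ((hRd.integrable hRm).const_mul 2), integral_const_mul]
    simpa [Φ, sub_eq_add_neg] using hsymm
  refine (measureReal_mono fun S (hS : τ ≤ f S) => ?_).trans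
    ((hfd.measure_ge_le (hΦm.sub (hRm.const_mul 2)) hτ).trans_eq ?_)
  · change τ ≤ f S - ∫ T, f T ∂μ
    linarith
  · norm_num [show (B : ℝ) + 2 * B = 3 * B by ring]

theorem measureReal_exists_lt_integral_le (hn : 0 < n) (hB : 0 < B)
    (hFm : ∀ t, Measurable (F t)) (hF : ∀ t z, F t z ∈ Set.Icc 0 (B : ℝ)) {ε : ℝ} (hε : 0 ≤ ε) :
    (Measure.pi fun _ : Fin n => P).real {S | ∃ t, 1 / (n : ℝ) * ∑ i, F t (S i) + 3 * B * ε +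
      2 / n * rademacherSum F S < ∫ z, F t z ∂P} ≤ exp (-(2 * n * ε ^ 2)) := by
  cases isEmpty_or_nonempty T
  · simp [exp_nonneg]
  have hn' : (0 : ℝ) < n := Nat.cast_pos.2 hn
  have : (0 : ℝ) < B := NNReal.coe_pos.2 hB
  have htail := measureReal_le_ciSup_sub_rademacherSum_le (n := n) (P := P) hFm hF
    (τ := n * (3 * B * ε)) (by positivity)
  refine (measureReal_mono ?_).trans (htail.trans_eq ?_)
  · rintro S ⟨t, ht⟩
    have hle := Finite.le_ciSup (fun t => n * ∫ z, F t z ∂P + ∑ i, -F t (S i)) t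
    have hscaled := mul_lt_mul_of_pos_left ht hn'
    rw [show n * (1 / n * ∑ i, F t (S i) + 3 * B * ε + 2 / n * rademacherSum F S) =
      ∑ i, F t (S i) + n * (3 * B * ε) + 2 * rademacherSum F S by field_simp] at hscaled
    simp only [Finset.sum_neg_distrib] at hle ⊢
    simp only [Set.mem_ofPred_eq]
    linarith
  · congr 1
    field_simp

end FiniteClass

section SeparableClass

variable {T Z : Type*} [MeasurableSpace Z] {n : ℕ} {F : T → Z → ℝ} {B : ℝ≥0} {P : Measure Z}
  [IsProbabilityMeasure P] {R : (Fin n → Z) → ℝ} {ε : ℝ}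

theorem measure_exists_seq_lt_integral_le {u : ℕ → T} (hn : 0 < n) (hB : 0 < B)
    (hFm : ∀ m, Measurable (F (u m))) (hF : ∀ m z, F (u m) z ∈ Set.Icc 0 (B : ℝ))
    (hR : ∀ N (S : Fin n → Z), rademacherSum (fun m : Fin (N + 1) => F (u m)) S ≤ R S)
    (hε : 0 ≤ ε) :
    (Measure.pi fun _ : Fin n => P) {S | ∃ m, 1 / (n : ℝ) * ∑ i, F (u m) (S i) + 3 * B * ε +
      2 / n * R S < ∫ z, F (u m) z ∂P} ≤ ENNReal.ofReal (exp (-(2 * n * ε ^ 2))) := by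
  let D : ℕ → Set (Fin n → Z) := fun N => {S | ∃ m ≤ N, 1 / (n : ℝ) * ∑ i, F (u m) (S i) +
    3 * B * ε + 2 / n * R S < ∫ z, F (u m) z ∂P}
  have hD : Monotone D := by
    rintro N N' hN S ⟨m, hm, h⟩
    exact ⟨m, hm.trans hN, h⟩
  have hDle (N : ℕ) : (Measure.pi fun _ : Fin n => P) (D N) ≤
      ENNReal.ofReal (exp (-(2 * n * ε ^ 2))) := by
    refine (ENNReal.le_ofReal_iff_toReal_le (measure_ne_top _ _) (exp_nonneg _)).2
      ((measureReal_mono ?_).trans (measureReal_exists_lt_integral_le (P := P) hn hB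
        (fun m : Fin (N + 1) => hFm m) (fun m => hF m) hε))
    rintro S ⟨m, hm, h⟩
    refine ⟨⟨m, Nat.lt_succ_of_le hm⟩, lt_of_le_of_lt ?_ h⟩
    gcongr
    exact hR N S
  refine (measure_mono ?_).trans (hD.measure_iUnion.trans_le (iSup_le hDle))
  rintro S ⟨m, h⟩
  exact Set.mem_iUnion.2 ⟨m, m, le_rfl, h⟩

theorem measure_exists_mem_lt_integral_le [PseudoMetricSpace T] {K : Set T}
    (hK : TopologicalSpace.IsSeparable K) (hn : 0 < n) (hB : 0 < B)
    (hFm : ∀ t, Measurable (F t)) (hFc : ∀ z, Continuous fun t => F t z)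
    (hF : ∀ t ∈ K, ∀ z, F t z ∈ Set.Icc 0 (B : ℝ))
    (hR : ∀ N (u : Fin (N + 1) → T), (∀ m, u m ∈ K) → ∀ S : Fin n → Z,
      rademacherSum (fun m => F (u m)) S ≤ R S)
    (hε : 0 ≤ ε) :
    (Measure.pi fun _ : Fin n => P) {S | ∃ t ∈ K, 1 / (n : ℝ) * ∑ i, F t (S i) + 3 * B * ε +
      2 / n * R S < ∫ z, F t z ∂P} ≤ ENNReal.ofReal (exp (-(2 * n * ε ^ 2))) := by
  rcases K.eq_empty_or_nonempty with rfl | hKne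
  · simp
  obtain ⟨D, hDK, hDc, hKD⟩ := hK.exists_countable_dense_subset
  obtain ⟨u, rfl⟩ := hDc.exists_eq_range (closure_nonempty_iff.1 (hKne.mono hKD))
  have huK (m : ℕ) : u m ∈ K := hDK (Set.mem_range_self m)
  refine (measure_mono ?_).trans (measure_exists_seq_lt_integral_le (P := P) (R := R) hn hB
    (fun m => hFm (u m)) (fun m => hF _ (huK m))
    (fun N => hR N (fun m => u m) fun m => huK m) hε)
  rintro S ⟨t, htK, ht⟩
  contrapose! ht
  simp only [Set.mem_ofPred_eq, not_exists, not_lt] at ht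
  obtain ⟨v, hv, hvt⟩ := mem_closure_iff_seq_limit.1 (hKD htK)
  have hlim (z : Z) : Filter.Tendsto (fun k => F (v k) z) Filter.atTop (nhds (F t z)) :=
    ((hFc z).tendsto t).comp hvt
  have hint : Filter.Tendsto (fun k => ∫ z, F (v k) z ∂P) Filter.atTop (nhds (∫ z, F t z ∂P)) :=
    tendsto_integral_of_dominated_convergence (fun _ => B)
      (fun k => (hFm (v k)).aestronglyMeasurable) (integrable_const _)
      (fun k => ae_of_all _ fun z => by
        have := hF _ (hDK (hv k)) z
        rw [norm_of_nonneg this.1]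
        exact this.2)
      (ae_of_all _ hlim)
  refine le_of_tendsto_of_tendsto' hint ((((tendsto_finsetSum _ fun i _ =>
    hlim (S i)).const_mul _).add_const _).add_const _) fun k => ?_
  obtain ⟨m, hm⟩ := hv k
  rw [← hm]
  exact ht m

end SeparableClass

section Contraction

theorem expect_finCons {Ω : Type*} [Fintype Ω] {n : ℕ} (f : (Fin (n + 1) → Ω) → ℝ) :
    𝔼 ω, f ω = 𝔼 a : Ω, 𝔼 ω : Fin n → Ω, f (Fin.cons a ω) := by
  rw [← Finset.expect_product' Finset.univ Finset.univ
    (fun (a : Ω) (ω : Fin n → Ω) => f (Fin.cons a ω)), Finset.univ_product_univ]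
  exact (Fintype.expect_equiv (Fin.consEquiv fun _ => Ω) _ _ fun _ => rfl).symm

theorem abs_le_expect_abs_sum_units_smul {κ : Type*} [Fintype κ] [DecidableEq κ] (x : κ → ℝ)
    (k : κ) : |x k| ≤ 𝔼 ε : κ → ℤˣ, |∑ j, ε j • x j| := by
  let flip : (κ → ℤˣ) ≃ (κ → ℤˣ) := Equiv.mulRight (Pi.mulSingle k (-1))
  let s : (κ → ℤˣ) → ℝ := fun ε => ∑ j, ε j • x j
  have hflip (ε : κ → ℤˣ) : s ε - s (flip ε) = ε k • (2 * x k) := by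
    simp only [s, flip, Equiv.coe_mulRight, ← Finset.sum_sub_distrib]
    rw [Finset.sum_eq_single k]
    · simp [two_mul]
    · intro j _ hj
      simp [Pi.mulSingle_eq_of_ne hj]
    · simp
  have hpair : 2 * |x k| ≤ 𝔼 ε, (|s ε| + |s (flip ε)|) := by
    refine Finset.le_expect Finset.univ_nonempty fun ε _ => ?_
    calc 2 * |x k| = |s ε - s (flip ε)| := by
          rw [hflip, abs_units_smul, abs_mul, abs_two]
      _ ≤ |s ε| + |s (flip ε)| := abs_sub _ _
  rw [Finset.expect_add_distrib,
    Fintype.expect_equiv flip (fun ε => |s (flip ε)|) (fun ε => |s ε|) fun _ => rfl] at hpair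
  linarith

variable {T Ω : Type*} [Finite T] [Nonempty T] [Fintype Ω] [Nonempty Ω] [InvolutiveNeg Ω]

theorem expect_ciSup_add_units_smul_le {ψ : T → ℝ} {Y : Ω → T → ℝ}
    (hY : ∀ ω t, Y (-ω) t = -Y ω t) (hψ : ∀ s t, |ψ s - ψ t| ≤ 𝔼 ω, |Y ω s - Y ω t|) (g : T → ℝ) :
    𝔼 u : ℤˣ, ⨆ t, (g t + u • ψ t) ≤ 𝔼 ω, ⨆ t, (g t + Y ω t) := by
  let M : Ω → ℝ := fun ω => ⨆ t, (g t + Y ω t)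
  obtain ⟨s, hs⟩ := exists_eq_ciSup_of_finite (f := fun t => g t + (1 : ℤˣ) • ψ t)
  obtain ⟨t, ht⟩ := exists_eq_ciSup_of_finite (f := fun t => g t + (-1 : ℤˣ) • ψ t)
  have hM (ω : Ω) : g s + g t + |Y ω s - Y ω t| ≤ M ω + M (-ω) := by
    have hplus (r : T) : g r + Y ω r ≤ M ω := Finite.le_ciSup (fun r => g r + Y ω r) r
    have hminus (r : T) : g r - Y ω r ≤ M (-ω) := by
      rw [sub_eq_add_neg, ← hY]
      exact Finite.le_ciSup (fun r => g r + Y (-ω) r) r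
    rcases abs_cases (Y ω s - Y ω t) with ⟨h, -⟩ | ⟨h, -⟩ <;>
      linarith [hplus s, hplus t, hminus s, hminus t]
  have hsum : g s + g t + |ψ s - ψ t| ≤ 2 * 𝔼 ω, M ω :=
    calc g s + g t + |ψ s - ψ t| ≤ g s + g t + 𝔼 ω, |Y ω s - Y ω t| := by grw [hψ]
      _ = 𝔼 ω, (g s + g t + |Y ω s - Y ω t|) := by
          rw [Finset.expect_add_distrib, Fintype.expect_const]
      _ ≤ 𝔼 ω, (M ω + M (-ω)) := Finset.expect_le_expect fun ω _ => hM ω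
      _ = 2 * 𝔼 ω, M ω := by
          rw [Finset.expect_add_distrib,
            Fintype.expect_equiv (Equiv.neg Ω) (fun ω => M (-ω)) M fun _ => rfl, two_mul]
  rw [expect_units_int, ← hs, ← ht]
  simp only [one_smul, Units.neg_smul]
  linarith [le_abs_self (ψ s - ψ t)]

theorem expect_ciSup_add_sum_units_smul_le {n : ℕ} {ψ : Fin n → T → ℝ} {Y : Fin n → Ω → T → ℝ}
    (hY : ∀ i ω t, Y i (-ω) t = -Y i ω t)
    (hψ : ∀ i s t, |ψ i s - ψ i t| ≤ 𝔼 ω, |Y i ω s - Y i ω t|) (g : T → ℝ) :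
    𝔼 σ : Fin n → ℤˣ, ⨆ t, (g t + ∑ i, σ i • ψ i t) ≤
      𝔼 ω : Fin n → Ω, ⨆ t, (g t + ∑ i, Y i (ω i) t) := by
  induction n generalizing g with
  | zero => simp
  | succ n ih =>
    simp only [expect_finCons, Fin.sum_univ_succ, Fin.cons_zero, Fin.cons_succ]
    calc 𝔼 u : ℤˣ, 𝔼 σ : Fin n → ℤˣ, ⨆ t, (g t + (u • ψ 0 t + ∑ i : Fin n, σ i • ψ i.succ t))
        ≤ 𝔼 u : ℤˣ, 𝔼 ω : Fin n → Ω, ⨆ t, (g t + ∑ i : Fin n, Y i.succ (ω i) t + u • ψ 0 t) := by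
          refine Finset.expect_le_expect fun u _ => ?_
          simpa only [add_assoc, add_comm, add_left_comm] using
            ih (fun i => hY i.succ) (fun i => hψ i.succ) fun t => g t + u • ψ 0 t
      _ = 𝔼 ω : Fin n → Ω, 𝔼 u : ℤˣ, ⨆ t, (g t + ∑ i : Fin n, Y i.succ (ω i) t + u • ψ 0 t) :=
          Finset.expect_comm _ _ _
      _ ≤ 𝔼 ω : Fin n → Ω, 𝔼 a : Ω, ⨆ t, (g t + ∑ i : Fin n, Y i.succ (ω i) t + Y 0 a t) :=
          Finset.expect_le_expect fun ω _ => expect_ciSup_add_units_smul_le (hY 0) (hψ 0) _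
      _ = 𝔼 a : Ω, 𝔼 ω : Fin n → Ω, ⨆ t, (g t + (Y 0 a t + ∑ i : Fin n, Y i.succ (ω i) t)) := by
          rw [Finset.expect_comm]
          simp only [add_comm, add_left_comm]

end Contraction

section Khintchine

theorem convexOn_add_le_add_of_mem_segment {E : Type*} [AddCommGroup E] [Module ℝ E] {s : Set E}
    {f : E → ℝ} (hf : ConvexOn ℝ s f) {x y a b : E} (hx : x ∈ s) (hy : y ∈ s)
    (ha : a ∈ segment ℝ x y) (hab : a + b = x + y) : f a + f b ≤ f x + f y := by
  obtain ⟨α, β, hα, hβ, hαβ, rfl⟩ := ha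
  have hb : b = β • x + α • y := by
    rw [← sub_eq_of_eq_add' hab.symm, eq_sub_of_add_eq' hαβ]
    module
  have h₁ := hf.2 hx hy hα hβ hαβ
  have h₂ := hf.2 hx hy hβ hα (by rwa [add_comm])
  rw [hb]
  simp only [smul_eq_mul] at h₁ h₂
  calc _ ≤ (α * f x + β * f y) + (β * f x + α * f y) := add_le_add h₁ h₂
    _ = f x + f y := by linear_combination (f x + f y) * hαβ

variable {E : Type*} [NormedAddCommGroup E] [InnerProductSpace ℝ E]

/- The parallelogram law and Cauchy–Schwarz say that `(‖x + v‖², ‖x - v‖²)` is majorized by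
`((‖x‖ + ‖v‖)², (‖x‖ - ‖v‖)²)`; compare the power series of `cosh` term by term. -/
theorem cosh_norm_add_add_cosh_norm_sub_le (x v : E) :
    cosh ‖x + v‖ + cosh ‖x - v‖ ≤ 2 * (cosh ‖x‖ * cosh ‖v‖) := by
  have hseg : ‖x + v‖ ^ 2 ∈ segment ℝ ((‖x‖ - ‖v‖) ^ 2) ((‖x‖ + ‖v‖) ^ 2) := by
    have hcs := abs_le.1 (abs_real_inner_le_norm x v)
    rw [segment_eq_Icc (by nlinarith [norm_nonneg x, norm_nonneg v]), norm_add_sq_real]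
    constructor <;> linarith [sub_sq ‖x‖ ‖v‖, add_sq ‖x‖ ‖v‖]
  have hsum : ‖x + v‖ ^ 2 + ‖x - v‖ ^ 2 = (‖x‖ - ‖v‖) ^ 2 + (‖x‖ + ‖v‖) ^ 2 := by
    rw [norm_add_sq_real, norm_sub_sq_real]
    ring
  calc cosh ‖x + v‖ + cosh ‖x - v‖ ≤ cosh (‖x‖ - ‖v‖) + cosh (‖x‖ + ‖v‖) := by
        refine hasSum_le (fun m => ?_) ((hasSum_cosh _).add (hasSum_cosh _))
          ((hasSum_cosh _).add (hasSum_cosh _))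
        simp only [← add_div, pow_mul]
        gcongr ?_ / _
        exact convexOn_add_le_add_of_mem_segment (convexOn_pow m)
          (Set.mem_Ici.2 (sq_nonneg _)) (Set.mem_Ici.2 (sq_nonneg _)) hseg hsum
    _ = 2 * (cosh ‖x‖ * cosh ‖v‖) := by
        rw [cosh_add, cosh_sub]
        ring

theorem expect_cosh_norm_add_sum_units_smul_le {n : ℕ} (v : Fin n → E) (x : E) :
    𝔼 σ : Fin n → ℤˣ, cosh ‖x + ∑ i, σ i • v i‖ ≤ cosh ‖x‖ * ∏ i, cosh ‖v i‖ := by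
  induction n generalizing x with
  | zero => simp
  | succ n ih =>
    simp only [expect_finCons, Fin.sum_univ_succ, Fin.cons_zero, Fin.cons_succ, ← add_assoc,
      Fin.prod_univ_succ, ← mul_assoc]
    refine (Finset.expect_le_expect fun u _ => ih _ _).trans ?_
    rw [← Finset.expect_mul, expect_units_int]
    simp only [one_smul, Units.neg_smul, ← sub_eq_add_neg]
    gcongr
    linarith [cosh_norm_add_add_cosh_norm_sub_le x (v 0)]

theorem rpow_le_mul_cosh {q y : ℝ} (hq : 0 < q) (hy : 0 ≤ y) :
    y ^ q ≤ 2 * (q ^ q * exp (-q)) * cosh y := by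
  have hexp : (y / q) ^ q ≤ exp (y - q) :=
    calc (y / q) ^ q ≤ exp (y / q - 1) ^ q := by
          gcongr
          linarith [add_one_le_exp (y / q - 1)]
      _ = exp (y - q) := by
          rw [← exp_mul]
          field_simp
  rw [div_rpow hy hq.le, div_le_iff₀ (by positivity)] at hexp
  calc y ^ q ≤ exp (y - q) * q ^ q := hexp
    _ = q ^ q * exp (-q) * exp y := by rw [sub_eq_add_neg, exp_add]; ring
    _ ≤ q ^ q * exp (-q) * (2 * cosh y) := by
        gcongr
        linarith [cosh_eq y, exp_pos (-y)]
    _ = 2 * (q ^ q * exp (-q)) * cosh y := by ring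

theorem two_mul_exp_neg_mul_exp_half_le_one {q : ℝ} (hq : 2 * log 2 ≤ q) :
    2 * (exp (-q) * exp (q / 2)) ≤ 1 := by
  rw [← exp_add, show -q + q / 2 = -(q / 2) by ring, exp_neg, ← div_eq_mul_inv,
    div_le_one (exp_pos _), ← log_le_iff_le_exp two_pos]
  linarith

theorem expect_rpow_norm_sum_units_smul_le_of_sum_eq {n : ℕ} {v : Fin n → E} {q : ℝ}
    (hq : 2 * log 2 ≤ q) (hv : ∑ i, ‖v i‖ ^ 2 = q) :
    𝔼 σ : Fin n → ℤˣ, ‖∑ i, σ i • v i‖ ^ q ≤ q ^ q := by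
  have hq₀ : 0 < q := by linarith [log_pos one_lt_two]
  calc 𝔼 σ : Fin n → ℤˣ, ‖∑ i, σ i • v i‖ ^ q
      ≤ 𝔼 σ : Fin n → ℤˣ, 2 * (q ^ q * exp (-q)) * cosh ‖∑ i, σ i • v i‖ :=
        Finset.expect_le_expect fun σ _ => rpow_le_mul_cosh hq₀ (norm_nonneg _)
    _ = 2 * (q ^ q * exp (-q)) * 𝔼 σ : Fin n → ℤˣ, cosh ‖∑ i, σ i • v i‖ :=
        (Finset.mul_expect _ _ _).symm
    _ ≤ 2 * (q ^ q * exp (-q)) * ∏ i, cosh ‖v i‖ := by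
        gcongr
        simpa using expect_cosh_norm_add_sum_units_smul_le v 0
    _ ≤ 2 * (q ^ q * exp (-q)) * ∏ i, exp (‖v i‖ ^ 2 / 2) := by
        gcongr with i
        exact cosh_le_exp_half_sq _
    _ = q ^ q * (2 * (exp (-q) * exp (q / 2))) := by
        rw [← exp_sum, ← Finset.sum_div, hv]
        ring
    _ ≤ q ^ q := mul_le_of_le_one_right (by positivity) (two_mul_exp_neg_mul_exp_half_le_one hq)

theorem expect_rpow_norm_sum_units_smul_le {n : ℕ} (v : Fin n → E) {q : ℝ} (hq : 2 * log 2 ≤ q) :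
    𝔼 σ : Fin n → ℤˣ, ‖∑ i, σ i • v i‖ ^ q ≤ √(q * ∑ i, ‖v i‖ ^ 2) ^ q := by
  have hq₀ : 0 < q := by linarith [log_pos one_lt_two]
  have hnonneg := Finset.sum_nonneg fun i (_ : i ∈ Finset.univ) => sq_nonneg ‖v i‖
  generalize hV : ∑ i, ‖v i‖ ^ 2 = V at hnonneg ⊢
  rcases hnonneg.eq_or_lt with rfl | hV₀
  · have hv (i : Fin n) : v i = 0 := by
      simpa using (Finset.sum_eq_zero_iff_of_nonneg fun i _ => sq_nonneg ‖v i‖).1 hV i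
        (Finset.mem_univ i)
    simp [hv, zero_rpow hq₀.ne']
  have hl : 0 < √(q / V) := sqrt_pos.2 (by positivity)
  have hscaled := expect_rpow_norm_sum_units_smul_le_of_sum_eq (v := fun i => √(q / V) • v i) hq
    (by simp only [norm_smul, mul_pow, ← Finset.mul_sum, norm_eq_abs, sq_abs]
        rw [sq_sqrt (by positivity), hV]
        field_simp)
  simp only [smul_comm _ √(q / V), ← Finset.smul_sum, norm_smul, norm_of_nonneg hl.le,
    mul_rpow hl.le (norm_nonneg _), ← Finset.mul_expect] at hscaled
  calc _ ≤ q ^ q / √(q / V) ^ q := (le_div_iff₀' (by positivity)).2 hscaled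
    _ = √(q * V) ^ q := by
        rw [← div_rpow hq₀.le hl.le]
        congr 1
        rw [div_eq_iff hl.ne', ← sqrt_mul (by positivity),
          show q * V * (q / V) = q ^ 2 by field_simp, sqrt_sq hq₀.le]

theorem rpow_expect_le_expect_rpow {Ω : Type*} [Fintype Ω] [Nonempty Ω] {f : Ω → ℝ}
    (hf : ∀ ω, 0 ≤ f ω) {q : ℝ} (hq : 1 ≤ q) : (𝔼 ω, f ω) ^ q ≤ 𝔼 ω, f ω ^ q := by
  have h := rpow_arith_mean_le_arith_mean_rpow Finset.univ
    (fun _ : Ω => 1 / (Fintype.card Ω : ℝ)) f (fun _ _ => by positivity) (by simp)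
    (fun ω _ => hf ω) hq
  simpa only [Fintype.expect_eq_sum_div_card, one_div_mul_eq_div, Finset.sum_div] using h

theorem expect_comp_eval {Ω κ : Type*} [Fintype Ω] [Nonempty Ω] [Fintype κ] [DecidableEq κ]
    (f : Ω → ℝ) (j : κ) : 𝔼 ω : κ → Ω, f (ω j) = 𝔼 a, f a := by
  rw [Fintype.expect_equiv (Equiv.funSplitAt j Ω) (fun ω => f (ω j)) (fun ω => f ω.1)
    fun ω => by simp, ← Finset.univ_product_univ, Finset.expect_product]
  simp only [Fintype.expect_const]

end Khintchine

section BlockNorm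

variable {E : Type*} [NormedAddCommGroup E] {c : ℕ} {p q r : ℝ}

theorem sum_rpow_norm_nonneg (p : ℝ) (w : Fin c → E) : 0 ≤ ∑ j, ‖w j‖ ^ p :=
  Finset.sum_nonneg fun _ _ => rpow_nonneg (norm_nonneg _) _

theorem norm2p_nonneg (p : ℝ) (w : Fin c → E) : 0 ≤ norm2p p w :=
  rpow_nonneg (sum_rpow_norm_nonneg p w) _

theorem norm2p_rpow (hp : p ≠ 0) (w : Fin c → E) : norm2p p w ^ p = ∑ j, ‖w j‖ ^ p := by
  rw [norm2p, ← rpow_mul (sum_rpow_norm_nonneg p w), one_div_mul_cancel hp, rpow_one]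

theorem norm2p_zero (hp : p ≠ 0) : norm2p p (0 : Fin c → E) = 0 := by
  simp [norm2p, zero_rpow hp, hp]

theorem norm_le_norm2p (hp : 0 < p) (w : Fin c → E) (j : Fin c) : ‖w j‖ ≤ norm2p p w := by
  rw [← rpow_le_rpow_iff (norm_nonneg _) (norm2p_nonneg _ _) hp, norm2p_rpow hp.ne']
  exact Finset.single_le_sum (f := fun j => ‖w j‖ ^ p)
    (fun j _ => rpow_nonneg (norm_nonneg _) _) (Finset.mem_univ j)

theorem norm2p_anti (hp : 0 < p) (hpr : p ≤ r) (w : Fin c → E) : norm2p r w ≤ norm2p p w := by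
  have hsplit {x : ℝ} (hx : 0 ≤ x) : x ^ r = x ^ p * x ^ (r - p) := by
    rw [← rpow_add_of_nonneg hx hp.le (sub_nonneg.2 hpr), add_sub_cancel]
  rw [← rpow_le_rpow_iff (norm2p_nonneg _ _) (norm2p_nonneg _ _) (hp.trans_le hpr),
    norm2p_rpow (hp.trans_le hpr).ne', hsplit (norm2p_nonneg _ _), norm2p_rpow hp.ne',
    Finset.sum_mul]
  refine Finset.sum_le_sum fun j _ => ?_
  rw [hsplit (norm_nonneg _)]
  gcongr
  exact norm_le_norm2p hp w j

theorem sqrt_sum_norm_sq_le_norm2p (hp₀ : 0 < p) (hp : p ≤ 2) (w : Fin c → E) :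
    √(∑ j, ‖w j‖ ^ 2) ≤ norm2p p w := by
  refine le_of_eq_of_le ?_ (norm2p_anti hp₀ hp w)
  simp [norm2p, sqrt_eq_rpow]

theorem norm2p_le_norm2p_of_norm_le (hp : 0 ≤ p) {w w' : Fin c → E} (h : ∀ j, ‖w j‖ ≤ ‖w' j‖) :
    norm2p p w ≤ norm2p p w' := by
  unfold norm2p
  gcongr
  exact h _

variable [InnerProductSpace ℝ E]

theorem sum_inner_le_norm2p_mul_norm2p (hrq : r.HolderConjugate q) (w u : Fin c → E) :
    ∑ j, ⟪w j, u j⟫ ≤ norm2p r w * norm2p q u :=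
  (Finset.sum_le_sum fun j _ => real_inner_le_norm (w j) (u j)).trans
    (inner_le_Lp_mul_Lq_of_nonneg _ hrq (fun _ _ => norm_nonneg _) fun _ _ => norm_nonneg _)

theorem expect_norm2p_sum_units_smul_le {n : ℕ} (v : Fin n → E) (hq₁ : 1 ≤ q)
    (hq : 2 * log 2 ≤ q) :
    𝔼 ω : Fin n → Fin c → ℤˣ, norm2p q (fun j => ∑ i, ω i j • v i) ≤
      (c : ℝ) ^ (1 / q) * √(q * ∑ i, ‖v i‖ ^ 2) := by
  have hq₀ : 0 < q := zero_lt_one.trans_le hq₁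
  have hcoord (j : Fin c) :
      𝔼 ω : Fin n → Fin c → ℤˣ, ‖∑ i, ω i j • v i‖ ^ q ≤ √(q * ∑ i, ‖v i‖ ^ 2) ^ q := by
    rw [Fintype.expect_equiv (Equiv.piComm fun _ _ => ℤˣ)
      (fun ω : Fin n → Fin c → ℤˣ => ‖∑ i, ω i j • v i‖ ^ q)
      (fun ω : Fin c → Fin n → ℤˣ => ‖∑ i, ω j i • v i‖ ^ q) fun _ => rfl,
      expect_comp_eval (fun σ : Fin n → ℤˣ => ‖∑ i, σ i • v i‖ ^ q) j]
    exact expect_rpow_norm_sum_units_smul_le v hq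
  refine (rpow_le_rpow_iff (Finset.expect_nonneg fun _ _ => norm2p_nonneg _ _) (by positivity)
    hq₀).1 ?_
  calc (𝔼 ω : Fin n → Fin c → ℤˣ, norm2p q (fun j => ∑ i, ω i j • v i)) ^ q
      ≤ 𝔼 ω : Fin n → Fin c → ℤˣ, ∑ j, ‖∑ i, ω i j • v i‖ ^ q := by
        simp only [← norm2p_rpow hq₀.ne']
        exact rpow_expect_le_expect_rpow (fun _ => norm2p_nonneg _ _) hq₁
    _ ≤ c * √(q * ∑ i, ‖v i‖ ^ 2) ^ q := by
        rw [Finset.expect_sum_comm]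
        exact (Finset.sum_le_sum fun j _ => hcoord j).trans_eq (by simp)
    _ = ((c : ℝ) ^ (1 / q) * √(q * ∑ i, ‖v i‖ ^ 2)) ^ q := by
        rw [mul_rpow (by positivity) (by positivity), ← rpow_mul (by positivity),
          one_div_mul_cancel hq₀.ne', rpow_one]

end BlockNorm

section Margin

theorem exists_abs_mcMargin_sub_le {X : Type*} {c : ℕ} (hc : 2 ≤ c) (h h' : X → Fin c → ℝ) (x : X)
    (y : Fin c) :
    ∃ k, |mcMargin h x y - mcMargin h' x y| ≤ |h x y - h' x y| + |h x k - h' x k| := by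
  have : Nontrivial (Fin c) := Fin.nontrivial_iff_two_le.2 hc
  have : Nonempty {y' // y' ≠ y} := nonempty_subtype.2 (exists_ne y)
  obtain ⟨k, hk⟩ := Finite.exists_max fun k => |h x k - h' x k|
  refine ⟨k, ?_⟩
  simp only [mcMargin, sub_sub_sub_comm (h x y)]
  exact (abs_sub _ _).trans (add_le_add le_rfl (abs_ciSup_sub_ciSup_le fun y' => hk y'.1))

theorem measurable_mcMargin {X : Type*} [MeasurableSpace X] {c : ℕ} {h : X → Fin c → ℝ}
    (hh : Measurable h) : Measurable fun z : X × Fin c => mcMargin h z.1 z.2 := by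
  have hj (j : Fin c) : Measurable fun x => h x j := measurable_pi_iff.1 hh j
  exact measurable_from_prod_countable_left fun y =>
    (hj y).sub (Measurable.iSup fun y' : {y' // y' ≠ y} => hj y'.1)

variable {X E : Type*} [NormedAddCommGroup E] [InnerProductSpace ℝ E] {c : ℕ}

/-- The linear multi-class hypothesis `h^w` with weights `w` over the feature map `φ`. -/
def linearScore (φ : X → E) (w : Fin c → E) : X → Fin c → ℝ := fun x j => ⟪w j, φ x⟫

/-- The loss `ℓ(ρ_{h^w}(x, y))` of the margin of `h^w` at the labelled point `z = (x, y)`. -/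
noncomputable def marginLoss (ℓ : ℝ → ℝ) (φ : X → E) (w : Fin c → E) (z : X × Fin c) : ℝ :=
  ℓ (mcMargin (linearScore φ w) z.1 z.2)

variable {φ : X → E} {ℓ : ℝ → ℝ} {L : ℝ≥0}

theorem exists_abs_marginLoss_sub_le (hc : 2 ≤ c) (hℓ : LipschitzWith L ℓ) (φ : X → E)
    (w w' : Fin c → E) (z : X × Fin c) :
    ∃ k, |marginLoss ℓ φ w z - marginLoss ℓ φ w' z| ≤
      L * (|⟪w z.2 - w' z.2, φ z.1⟫| + |⟪w k - w' k, φ z.1⟫|) := by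
  obtain ⟨k, hk⟩ := exists_abs_mcMargin_sub_le hc (linearScore φ w) (linearScore φ w') z.1 z.2
  refine ⟨k, (hℓ.dist_le_mul _ _).trans ?_⟩
  simp only [inner_sub_left]
  gcongr
  exact hk

theorem continuous_marginLoss (hc : 2 ≤ c) (hℓ : LipschitzWith L ℓ) (z : X × Fin c) :
    Continuous fun w : Fin c → E => marginLoss ℓ φ w z := by
  refine (LipschitzWith.of_dist_le_mul (K := L * (2 * ‖φ z.1‖₊)) fun w w' => ?_).continuous
  obtain ⟨k, hk⟩ := exists_abs_marginLoss_sub_le hc hℓ φ w w' z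
  have hinner (j : Fin c) : |⟪w j - w' j, φ z.1⟫| ≤ dist w w' * ‖φ z.1‖ :=
    (abs_real_inner_le_norm _ _).trans
      (mul_le_mul_of_nonneg_right (dist_eq_norm w w' ▸ norm_le_pi_norm (w - w') j)
        (norm_nonneg _))
  calc dist (marginLoss ℓ φ w z) (marginLoss ℓ φ w' z)
      ≤ L * (dist w w' * ‖φ z.1‖ + dist w w' * ‖φ z.1‖) :=
        hk.trans (by gcongr <;> exact hinner _)
    _ = _ := by push_cast; ring

theorem abs_marginLoss_sub_le_expect (hc : 2 ≤ c) (hℓ : LipschitzWith L ℓ) (φ : X → E)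
    (w w' : Fin c → E) (z : X × Fin c) :
    |marginLoss ℓ φ w z - marginLoss ℓ φ w' z| ≤
      2 * L * 𝔼 ε : Fin c → ℤˣ, |∑ j, ε j • ⟪w j - w' j, φ z.1⟫| := by
  obtain ⟨k, hk⟩ := exists_abs_marginLoss_sub_le hc hℓ φ w w' z
  have habs (k : Fin c) := abs_le_expect_abs_sum_units_smul (fun j => ⟪w j - w' j, φ z.1⟫) k
  grw [hk, habs, habs]
  exact le_of_eq (by ring)

theorem sum_sum_units_smul_inner_le {n : ℕ} {r q : ℝ} (hrq : r.HolderConjugate q)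
    (w : Fin c → E) (v : Fin n → E) (ω : Fin n → Fin c → ℤˣ) :
    ∑ i, ∑ j, ω i j • ⟪w j, v i⟫ ≤ norm2p r w * norm2p q (fun j => ∑ i, ω i j • v i) := by
  refine le_of_eq_of_le ?_ (sum_inner_le_norm2p_mul_norm2p hrq w _)
  rw [Finset.sum_comm]
  simp only [inner_sum, Units.smul_def, ← Int.cast_smul_eq_zsmul ℝ, inner_smul_right, smul_eq_mul]

theorem rademacherSum_marginLoss_le {T : Type*} [Finite T] [Nonempty T] {n : ℕ} {r q Λ : ℝ}
    (hc : 2 ≤ c) (hℓ : LipschitzWith L ℓ) (hrq : r.HolderConjugate q) (hq : 2 * log 2 ≤ q)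
    {W : T → Fin c → E} (hW : ∀ t, norm2p r (W t) ≤ Λ) (S : Fin n → X × Fin c) :
    rademacherSum (fun t => marginLoss ℓ φ (W t)) S ≤
      2 * L * Λ * ((c : ℝ) ^ (1 / q) * √(q * ∑ i, ‖φ (S i).1‖ ^ 2)) := by
  have hΛ : 0 ≤ Λ := ‹Nonempty T›.elim fun t => (norm2p_nonneg _ _).trans (hW t)
  let Y (i : Fin n) (ε : Fin c → ℤˣ) (t : T) : ℝ := 2 * L * ∑ j, ε j • ⟪W t j, φ (S i).1⟫
  have hY (i : Fin n) (ε : Fin c → ℤˣ) (t : T) : Y i (-ε) t = -Y i ε t := by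
    simp [Y, Units.neg_smul]
  have hlip (i : Fin n) (s t : T) : |marginLoss ℓ φ (W s) (S i) - marginLoss ℓ φ (W t) (S i)| ≤
      𝔼 ε, |Y i ε s - Y i ε t| := by
    refine (abs_marginLoss_sub_le_expect hc hℓ φ (W s) (W t) (S i)).trans_eq ?_
    simp only [Y, ← mul_sub, ← Finset.sum_sub_distrib, ← smul_sub, ← inner_sub_left, abs_mul,
      NNReal.abs_eq, abs_two, ← Finset.mul_expect]
  have hsup (ω : Fin n → Fin c → ℤˣ) (t : T) :
      ∑ i, Y i (ω i) t ≤ 2 * L * Λ * norm2p q (fun j => ∑ i, ω i j • φ (S i).1) := by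
    rw [← Finset.mul_sum, mul_assoc _ Λ]
    grw [sum_sum_units_smul_inner_le hrq, hW]
    exact norm2p_nonneg _ _
  calc rademacherSum (fun t => marginLoss ℓ φ (W t)) S
      ≤ 𝔼 ω : Fin n → Fin c → ℤˣ, ⨆ t, ∑ i, Y i (ω i) t := by
        simpa only [zero_add] using! expect_ciSup_add_sum_units_smul_le hY hlip fun _ => 0
    _ ≤ 2 * L * Λ * 𝔼 ω : Fin n → Fin c → ℤˣ, norm2p q (fun j => ∑ i, ω i j • φ (S i).1) := by
        rw [Finset.mul_expect]
        exact Finset.expect_le_expect fun ω _ => ciSup_le (hsup ω)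
    _ ≤ _ := by
        gcongr
        exact expect_norm2p_sum_units_smul_le _ hrq.symm.lt.le hq

variable [MeasurableSpace X] [MeasurableSpace E] [BorelSpace E]

theorem measurable_linearScore (hφ : Measurable φ) (w : Fin c → E) :
    Measurable (linearScore φ w) :=
  measurable_pi_iff.2 fun j => (innerSL ℝ (w j)).continuous.measurable.comp hφ

theorem measurable_marginLoss (hφ : Measurable φ) (hℓ : LipschitzWith L ℓ) (w : Fin c → E) :
    Measurable (marginLoss ℓ φ w) :=
  hℓ.continuous.measurable.comp (measurable_mcMargin (measurable_linearScore hφ w))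

theorem measureReal_mcMargin_nonpos_le_integral {P : Measure (X × Fin c)} [IsFiniteMeasure P]
    {w : Fin c → E} (hφ : Measurable φ) (hℓ₀ : ∀ t, 0 ≤ ℓ t) (hℓ₁ : ∀ t ≤ 0, 1 ≤ ℓ t)
    (hint : Integrable (marginLoss ℓ φ w) P) :
    P.real {z | mcMargin (linearScore φ w) z.1 z.2 ≤ 0} ≤ ∫ z, marginLoss ℓ φ w z ∂P := by
  have hs : MeasurableSet {z : X × Fin c | mcMargin (linearScore φ w) z.1 z.2 ≤ 0} :=
    measurableSet_le (measurable_mcMargin (measurable_linearScore hφ w)) measurable_const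
  rw [← integral_indicator_one hs]
  refine integral_mono ((integrable_const 1).indicator hs) hint fun z => ?_
  exact Set.indicator_le' (fun z hz => hℓ₁ _ hz) (fun z _ => hℓ₀ _) z

end Margin

section Constants

theorem two_mul_sqrt_add_one_le {q : ℝ} (hq : 2 * log 2 ≤ q) :
    2 * √q + 1 ≤ (2 * q) ^ (1 + 1 / q) := by
  have hq' : 1.38 < q := by linarith [log_two_gt_d9]
  have hsq : √q ^ 2 = q := sq_sqrt (by linarith)
  have hbase : 1 ≤ 2 * q := by linarith
  rw [rpow_add (by linarith), rpow_one]
  rcases le_total 2 q with h | h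
  · have hpow : 1 ≤ (2 * q) ^ (1 / q) := one_le_rpow hbase (by positivity)
    have hsqrt : 1.4 ≤ √q := le_sqrt_of_sq_le (by linarith)
    nlinarith
  · have hpow : √(2 * q) ≤ (2 * q) ^ (1 / q) := by
      rw [sqrt_eq_rpow]
      exact rpow_le_rpow_of_exponent_le hbase (one_div_le_one_div_of_le (by linarith) h)
    have hsqrt₂ : 1.66 ≤ √(2 * q) := le_sqrt_of_sq_le (by linarith)
    have hsqrt : 1.17 ≤ √q := le_sqrt_of_sq_le (by linarith)
    nlinarith

theorem two_mul_rpow_mul_sqrt_add_one_le {x q : ℝ} (hx : 1 ≤ x) (hq : 2 * log 2 ≤ q) :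
    2 * (x ^ (1 / q) * √q) + 1 ≤ (2 * q) ^ (1 + 1 / q) * x ^ (1 / q) := by
  have hq₀ : 0 < q := (mul_pos two_pos (log_pos one_lt_two)).trans_le hq
  have hpow : 1 ≤ x ^ (1 / q) := one_le_rpow hx (by positivity)
  calc 2 * (x ^ (1 / q) * √q) + 1 ≤ (2 * √q + 1) * x ^ (1 / q) := by linarith
    _ ≤ (2 * q) ^ (1 + 1 / q) * x ^ (1 / q) := by grw [two_mul_sqrt_add_one_le hq]

theorem rpow_one_div_two_mul_log {x : ℝ} (hx : 1 < x) : x ^ (1 / (2 * log x)) = √(exp 1) := by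
  have hlog : log x ≠ 0 := (log_pos hx).ne'
  rw [rpow_def_of_pos (by linarith), sqrt_eq_rpow, ← exp_mul]
  congr 1
  field_simp

/-- The constant `K` of the generalization bound, for `c` classes and exponent `p`: the first
branch replaces `p` by the conjugate exponent of `2 log c`, which is at least `p`. -/
noncomputable def classConstant (c : ℕ) (p : ℝ) : ℝ :=
  if p ≤ (2 * log c) / (2 * log c - 1) then √(exp 1) * (4 * log c) ^ (1 + 1 / (2 * log c))
  else (2 * p / (p - 1)) ^ (2 - 1 / p) * (c : ℝ) ^ ((p - 1) / p)

theorem exists_holderConjugate_le_classConstant {c : ℕ} (hc : 2 ≤ c) {p : ℝ} (hp : p ≤ 2) :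
    ∃ r q : ℝ, r.HolderConjugate q ∧ p ≤ r ∧ 2 * log 2 ≤ q ∧
      2 * ((c : ℝ) ^ (1 / q) * √q) + 1 ≤ classConstant c p := by
  have hc' : (2 : ℝ) ≤ c := mod_cast hc
  have hlog : log 2 ≤ log c := log_le_log two_pos hc'
  have hlog₂ := log_two_gt_d9
  unfold classConstant
  split_ifs with h
  · refine ⟨2 * log c / (2 * log c - 1), 2 * log c,
      (HolderConjugate.conjExponent (by linarith)).symm, h, by linarith, ?_⟩
    refine (two_mul_rpow_mul_sqrt_add_one_le (by linarith) (by linarith)).trans_eq ?_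
    rw [rpow_one_div_two_mul_log (by linarith), mul_comm]
    ring_nf
  · have hp₁ : 1 < p := ((one_lt_div (by linarith)).2 (by linarith)).trans (not_le.1 h)
    have hq : 2 * log 2 ≤ p / (p - 1) := by
      rw [le_div_iff₀ (by linarith)]
      nlinarith [log_two_lt_d9]
    refine ⟨p, p / (p - 1), HolderConjugate.conjExponent hp₁, le_rfl, hq, ?_⟩
    refine (two_mul_rpow_mul_sqrt_add_one_le (by linarith) hq).trans_eq ?_
    have hp₀ : p ≠ 0 := by linarith
    have hp₁' : p - 1 ≠ 0 := by linarith
    congr 2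
    · ring
    · field_simp
      ring
    · field_simp

end Constants

section SeparableSupport

open TopologicalSpace

variable {Ω E : Type*} [MeasurableSpace Ω] [NormedAddCommGroup E] [InnerProductSpace ℝ E]
  [MeasurableSpace E] [BorelSpace E] {ψ : Ω → E}

theorem countable_setOf_not_ae_inner_eq_zero {ι : Type*} {μ : Measure Ω} [IsFiniteMeasure μ]
    {v : ι → E} (hv : Orthonormal ℝ v) (hψ : Measurable ψ) :
    {i | ¬ ∀ᵐ z ∂μ, ⟪v i, ψ z⟫ = 0}.Countable := by
  -- Normalizing `ψ` makes the squared coefficients summable with integral at most `μ univ`.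
  let f (i : ι) (z : Ω) : ℝ≥0∞ := ENNReal.ofReal (⟪v i, ‖ψ z‖⁻¹ • ψ z⟫ ^ 2)
  have hf (i : ι) : Measurable (f i) :=
    (((innerSL ℝ (v i)).continuous.measurable.comp
      ((continuous_norm.measurable.comp hψ).inv.smul hψ)).pow_const 2).ennreal_ofReal
  have hbessel (t : Finset ι) (z : Ω) : ∑ i ∈ t, f i z ≤ 1 := by
    rw [← ENNReal.ofReal_sum_of_nonneg fun i _ => sq_nonneg _, ENNReal.ofReal_le_one]
    refine le_trans ?_ (pow_le_one₀ (n := 2) (norm_nonneg (‖ψ z‖⁻¹ • ψ z)) ?_)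
    · simpa only [norm_eq_abs, sq_abs] using hv.sum_inner_products_le (s := t) (‖ψ z‖⁻¹ • ψ z)
    · rw [norm_smul, norm_inv, norm_norm]
      exact inv_mul_le_one
  have hsum : ∑' i, ∫⁻ z, f i z ∂μ ≤ μ Set.univ := by
    rw [ENNReal.tsum_eq_iSup_sum]
    refine iSup_le fun t => ?_
    rw [← lintegral_finsetSum _ fun i _ => hf i, ← lintegral_one]
    exact lintegral_mono (hbessel t)
  have hcountable := Summable.countable_support_ennreal (hsum.trans_lt (measure_lt_top μ _)).ne
  refine hcountable.mono fun i hi => Function.mem_support.2 fun hzero => hi ?_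
  filter_upwards [(lintegral_eq_zero_iff (hf i)).1 hzero] with z hz
  have hz' : ‖ψ z‖⁻¹ * ⟪v i, ψ z⟫ = 0 := by
    simpa [f, inner_smul_right, ← mul_pow, (sq_nonneg _).ge_iff_eq'] using hz
  rcases mul_eq_zero.1 hz' with h | h
  · rw [norm_eq_zero.1 (inv_eq_zero.1 h), inner_zero_right]
  · exact h

theorem exists_isSeparable_forall_mem_orthogonal_ae_inner_eq_zero [CompleteSpace E]
    {μ : Measure Ω} [IsFiniteMeasure μ] (hψ : Measurable ψ) :
    ∃ V : Submodule ℝ E, IsClosed (V : Set E) ∧ IsSeparable (V : Set E) ∧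
      ∀ w ∈ Vᗮ, ∀ᵐ z ∂μ, ⟪w, ψ z⟫ = 0 := by
  obtain ⟨s, b, -⟩ := exists_hilbertBasis ℝ E
  let J : Set s := {i | ¬ ∀ᵐ z ∂μ, ⟪b i, ψ z⟫ = 0}
  have hJ : J.Countable := countable_setOf_not_ae_inner_eq_zero b.orthonormal hψ
  refine ⟨(Submodule.span ℝ (b '' J)).topologicalClosure, Submodule.isClosed_topologicalClosure _,
    ((hJ.image b).isSeparable.span (R := ℝ)).closure, fun w hw => ?_⟩
  have hsupp := (b.orthonormal.inner_products_summable w).countable_support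
  have hae : ∀ᵐ z ∂μ, ∀ i ∈ Function.support fun i => ‖⟪b i, w⟫‖ ^ 2, ⟪b i, ψ z⟫ = 0 := by
    refine (ae_ball_iff hsupp).2 fun i hi => not_not.1 fun hiJ => hi ?_
    have hbi : ⟪b i, w⟫ = 0 := (Submodule.mem_orthogonal _ w).1 hw (b i)
      (Submodule.le_topologicalClosure _ (Submodule.subset_span ⟨i, hiJ, rfl⟩))
    simp [hbi]
  filter_upwards [hae] with z hz
  rw [← b.tsum_inner_mul_inner w (ψ z)]
  refine (tsum_congr fun i => ?_).trans tsum_zero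
  by_cases hi : ⟪b i, w⟫ = 0
  · rw [real_inner_comm, hi, zero_mul]
  · rw [hz i (by simpa using hi), mul_zero]

theorem measure_pi_setOf_pairwise_eq_one {P : Measure Ω} [IsProbabilityMeasure P]
    {r : Ω → Ω → Prop} [Std.Symm r] (hr : ∀ z, ∀ᵐ z' ∂P, r z z') (n : ℕ) :
    Measure.pi (fun _ : Fin n => P) {S | Pairwise fun i j => r (S i) (S j)} = 1 := by
  induction n with
  | zero => simp [Subsingleton.pairwise]
  | succ n ih =>
    set G := {S : Fin (n + 1) → Ω | Pairwise fun i j => r (S i) (S j)}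
    set A := toMeasurable (Measure.pi fun _ => P) G
    have hA : MeasurableSet A := measurableSet_toMeasurable _ _
    have hslice (z : Ω) :
        Measure.pi (fun _ : Fin n => P) {S | (Fin.cons z S : Fin (n + 1) → Ω) ∈ A} = 1 := by
      refine le_antisymm prob_le_one (ih.symm.le.trans (measure_mono_ae ?_))
      have hz : ∀ᵐ S ∂Measure.pi fun _ : Fin n => P, ∀ j, r z (S j) :=
        ae_all_iff.2 fun j => Measure.tendsto_eval_ae_ae.eventually (hr z)
      filter_upwards [hz] with S hzS hS
      let S' : Fin (n + 1) → Ω := Fin.cons z S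
      have : Std.Symm fun i j => r (S' i) (S' j) := ⟨fun _ _ => Std.Symm.symm _ _⟩
      exact subset_toMeasurable _ _ (pairwise_fin_succ_iff_of_isSymm.2 ⟨hzS, hS⟩)
    rw [← measure_toMeasurable G,
      ← (measurePreserving_piFinSuccAbove (fun _ => P) 0).symm.measure_preimage_equiv,
      Measure.prod_apply ((MeasurableEquiv.measurable _) hA)]
    refine (lintegral_congr fun z => ?_).trans (lintegral_one.trans measure_univ)
    simp_rw [← Fin.insertNth_zero'] at hslice
    exact hslice z

end SeparableSupport

section OrthogonalResiduals

variable {E ι : Type*} [NormedAddCommGroup E] [InnerProductSpace ℝ E]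

theorem norm_sum_smul_sq_of_pairwise_inner_eq_zero {s : Finset ι} {v : ι → E}
    (hv : Pairwise fun i j => ⟪v i, v j⟫ = 0) (a : ι → ℝ) :
    ‖∑ i ∈ s, a i • v i‖ ^ 2 = ∑ i ∈ s, a i ^ 2 * ‖v i‖ ^ 2 := by
  rw [← real_inner_self_eq_norm_sq, sum_inner]
  refine Finset.sum_congr rfl fun i hi => ?_
  rw [inner_sum, Finset.sum_eq_single_of_mem i hi fun j _ hji => by
    rw [real_inner_smul_left, real_inner_smul_right, hv hji.symm, mul_zero, mul_zero]]
  rw [real_inner_smul_left, real_inner_smul_right, real_inner_self_eq_norm_sq]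
  ring

theorem sum_abs_inner_le_of_pairwise_inner_eq_zero {s : Finset ι} {v : ι → E}
    (hv : Pairwise fun i j => ⟪v i, v j⟫ = 0) (x : E) :
    ∑ i ∈ s, |⟪x, v i⟫| ≤ ‖x‖ * √(∑ i ∈ s, ‖v i‖ ^ 2) := by
  let a (i : ι) : ℝ := SignType.sign ⟪x, v i⟫
  have ha (i : ι) : a i ^ 2 ≤ 1 := by
    rcases h : SignType.sign ⟪x, v i⟫ <;> simp [a, h]
  calc ∑ i ∈ s, |⟪x, v i⟫| = ⟪x, ∑ i ∈ s, a i • v i⟫ := by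
        simp only [a, inner_sum, real_inner_smul_right, sign_mul_self]
    _ ≤ ‖x‖ * ‖∑ i ∈ s, a i • v i‖ := real_inner_le_norm _ _
    _ ≤ ‖x‖ * √(∑ i ∈ s, ‖v i‖ ^ 2) := by
        gcongr
        refine le_sqrt_of_sq_le ?_
        rw [norm_sum_smul_sq_of_pairwise_inner_eq_zero hv]
        exact Finset.sum_le_sum fun i _ => mul_le_of_le_one_left (sq_nonneg _) (ha i)

theorem sum_abs_inner_comp_le_of_pairwise_inner_eq_zero {κ : Type*} [Fintype ι] [Fintype κ]
    {v : ι → E} (hv : Pairwise fun i j => ⟪v i, v j⟫ = 0) (u : κ → E) (k : ι → κ) :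
    ∑ i, |⟪u (k i), v i⟫| ≤ √(∑ j, ‖u j‖ ^ 2) * √(∑ i, ‖v i‖ ^ 2) := by
  classical
  calc ∑ i, |⟪u (k i), v i⟫| = ∑ j, ∑ i with k i = j, |⟪u j, v i⟫| := by
        rw [← Finset.sum_fiberwise Finset.univ k]
        refine Finset.sum_congr rfl fun j _ => Finset.sum_congr rfl fun i hi => ?_
        rw [(Finset.mem_filter.1 hi).2]
    _ ≤ ∑ j, ‖u j‖ * √(∑ i with k i = j, ‖v i‖ ^ 2) :=
        Finset.sum_le_sum fun j _ => sum_abs_inner_le_of_pairwise_inner_eq_zero hv (u j)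
    _ ≤ √(∑ j, ‖u j‖ ^ 2) * √(∑ j, √(∑ i with k i = j, ‖v i‖ ^ 2) ^ 2) :=
        sum_mul_le_sqrt_mul_sqrt _ _ _
    _ = √(∑ j, ‖u j‖ ^ 2) * √(∑ i, ‖v i‖ ^ 2) := by
        simp only [sq_sqrt (Finset.sum_nonneg fun _ _ => sq_nonneg _),
          Finset.sum_fiberwise Finset.univ k]

variable {X : Type*} {n c : ℕ} {φ : X → E} {ℓ : ℝ → ℝ} {L : ℝ≥0} {V : Submodule ℝ E}
  [V.HasOrthogonalProjection]

theorem sum_marginLoss_starProjection_le (hc : 2 ≤ c) (hℓ : LipschitzWith L ℓ)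
    {S : Fin n → X × Fin c}
    (hS : Pairwise fun i j => ⟪Vᗮ.starProjection (φ (S i).1), φ (S j).1⟫ = 0) (w : Fin c → E) :
    ∑ i, marginLoss ℓ φ (fun j => V.starProjection (w j)) (S i) ≤ ∑ i, marginLoss ℓ φ w (S i) +
      2 * L * (√(∑ j, ‖w j‖ ^ 2) * √(∑ i, ‖φ (S i).1‖ ^ 2)) := by
  let Q := Vᗮ.starProjection
  let v (i : Fin n) : E := Q (φ (S i).1)
  have hQ (x y : E) : ⟪Q x, Q y⟫ = ⟪Q x, y⟫ := by
    rw [← Vᗮ.inner_starProjection_left_eq_right,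
      Submodule.starProjection_eq_self_iff.2 (Submodule.starProjection_apply_mem _ _)]
  have hv : Pairwise fun i j => ⟪v i, v j⟫ = 0 := fun i j hij => (hQ _ _).trans (hS hij)
  have hloss (i : Fin n) : ∃ k, marginLoss ℓ φ (fun j => V.starProjection (w j)) (S i) ≤
      marginLoss ℓ φ w (S i) + L * (|⟪Q (w (S i).2), v i⟫| + |⟪Q (w k), v i⟫|) := by
    obtain ⟨k, hk⟩ := exists_abs_marginLoss_sub_le hc hℓ φ w (fun j => V.starProjection (w j)) (S i)
    refine ⟨k, ?_⟩
    simp only [v, hQ]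
    simp only [Q, Submodule.starProjection_orthogonal_val]
    linarith [(abs_le.1 hk).1]
  choose k hk using hloss
  have hsum (k : Fin n → Fin c) :
      ∑ i, |⟪Q (w (k i)), v i⟫| ≤ √(∑ j, ‖w j‖ ^ 2) * √(∑ i, ‖φ (S i).1‖ ^ 2) := by
    refine (sum_abs_inner_comp_le_of_pairwise_inner_eq_zero hv (fun j => Q (w j)) k).trans ?_
    gcongr <;> exact Submodule.norm_starProjection_apply_le _ _
  calc ∑ i, marginLoss ℓ φ (fun j => V.starProjection (w j)) (S i)
      ≤ ∑ i, (marginLoss ℓ φ w (S i) + L * (|⟪Q (w (S i).2), v i⟫| + |⟪Q (w (k i)), v i⟫|)) :=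
        Finset.sum_le_sum fun i _ => hk i
    _ = ∑ i, marginLoss ℓ φ w (S i) +
          L * (∑ i, |⟪Q (w (S i).2), v i⟫| + ∑ i, |⟪Q (w (k i)), v i⟫|) := by
        rw [Finset.sum_add_distrib, ← Finset.mul_sum, Finset.sum_add_distrib]
    _ ≤ _ := by
        grw [hsum k, hsum fun i => (S i).2]
        exact le_of_eq (by ring)

end OrthogonalResiduals

section GeneralizationBound

open TopologicalSpace

variable {X E : Type*} [MeasurableSpace X] [NormedAddCommGroup E] [InnerProductSpace ℝ E]
  {n c : ℕ} {P : Measure (X × Fin c)} {φ : X → E}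
  {ℓ : ℝ → ℝ} {L : ℝ≥0} {p r q Λ B : ℝ} {V : Submodule ℝ E}

theorem ofReal_one_sub_le_measure_of_subset_union {Ω : Type*} [MeasurableSpace Ω] {μ : Measure Ω}
    {s t u : Set Ω} {δ : ℝ} (hδ : 0 ≤ δ) (hs : μ s = 1) (hstu : s ⊆ t ∪ u)
    (hu : μ u ≤ ENNReal.ofReal δ) : ENNReal.ofReal (1 - δ) ≤ μ t := by
  rw [ENNReal.ofReal_sub _ hδ, ENNReal.ofReal_one, tsub_le_iff_right, ← hs]
  grw [hstu, measure_union_le, hu]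

theorem exp_neg_two_mul_sqrt_log_div_sq {n : ℕ} (hn : 0 < n) {δ : ℝ} (hδ₀ : 0 < δ) (hδ₂ : δ ≤ 2) :
    exp (-(2 * n * √(log (2 / δ) / (2 * n)) ^ 2)) = δ / 2 := by
  have hlog : 0 ≤ log (2 / δ) := log_nonneg ((one_le_div hδ₀).2 hδ₂)
  have : (n : ℝ) ≠ 0 := mod_cast hn.ne'
  rw [sq_sqrt (by positivity), mul_div_cancel₀ _ (by positivity), exp_neg,
    exp_log (by positivity), inv_div]

theorem measure_pi_setOf_pairwise_inner_starProjection_eq_one [IsProbabilityMeasure P]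
    [V.HasOrthogonalProjection] (hV : ∀ u ∈ Vᗮ, ∀ᵐ z ∂P, ⟪u, φ z.1⟫ = 0) (n : ℕ) :
    Measure.pi (fun _ : Fin n => P)
      {S | Pairwise fun i j => ⟪Vᗮ.starProjection (φ (S i).1), φ (S j).1⟫ = 0} = 1 := by
  have : Std.Symm fun z z' : X × Fin c => ⟪Vᗮ.starProjection (φ z.1), φ z'.1⟫ = 0 :=
    ⟨fun z z' h => by rwa [real_inner_comm, ← Vᗮ.inner_starProjection_left_eq_right]⟩
  exact measure_pi_setOf_pairwise_eq_one
    (fun z => hV _ (Submodule.starProjection_apply_mem _ (φ z.1))) n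

theorem measureReal_mcMargin_nonpos_congr {w w' : Fin c → E}
    (h : ∀ j, ∀ᵐ z ∂P, ⟪w j - w' j, φ z.1⟫ = 0) :
    P.real {z | mcMargin (linearScore φ w) z.1 z.2 ≤ 0} =
      P.real {z | mcMargin (linearScore φ w') z.1 z.2 ≤ 0} := by
  refine measureReal_congr ?_
  filter_upwards [ae_all_iff.2 h] with z hz
  have hscore (j : Fin c) : linearScore φ w z.1 j = linearScore φ w' z.1 j :=
    sub_eq_zero.1 ((inner_sub_left _ _ _).symm.trans (hz j))
  have hmargin : mcMargin (linearScore φ w) z.1 z.2 = mcMargin (linearScore φ w') z.1 z.2 := by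
    simp only [mcMargin, hscore]
  exact congrArg (· ≤ 0) hmargin

variable [MeasurableSpace E] [BorelSpace E]

theorem measureReal_mcMargin_nonpos_le_of_starProjection [IsFiniteMeasure P]
    [V.HasOrthogonalProjection] (hc : 2 ≤ c) (hφ : Measurable φ) (hℓ₀ : ∀ t, 0 ≤ ℓ t)
    (hℓ₁ : ∀ t ≤ 0, 1 ≤ ℓ t) (hℓ : LipschitzWith L ℓ) (hp₀ : 0 < p) (hp₂ : p ≤ 2)
    (hB : ∀ w : Fin c → E, norm2p p w ≤ Λ → ∀ z, marginLoss ℓ φ w z ≤ B)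
    (hV : ∀ u ∈ Vᗮ, ∀ᵐ z ∂P, ⟪u, φ z.1⟫ = 0) {S : Fin n → X × Fin c}
    (hS : Pairwise fun i j => ⟪Vᗮ.starProjection (φ (S i).1), φ (S j).1⟫ = 0) {a t : ℝ}
    (ha : ∀ w : Fin c → E, (∀ j, w j ∈ V) → norm2p p w ≤ Λ → ∫ z, marginLoss ℓ φ w z ∂P ≤
      1 / (n : ℝ) * ∑ i, marginLoss ℓ φ w (S i) + t +
        2 / n * (2 * L * Λ * (a * √(∑ i, ‖φ (S i).1‖ ^ 2))))
    {w : Fin c → E} (hw : norm2p p w ≤ Λ) :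
    P.real {z | mcMargin (linearScore φ w) z.1 z.2 ≤ 0} ≤
      1 / (n : ℝ) * ∑ i, marginLoss ℓ φ w (S i) + t +
        2 * L * Λ / n * √(∑ i, ‖φ (S i).1‖ ^ 2) * (2 * a + 1) := by
  set w' : Fin c → E := fun j => V.starProjection (w j)
  set Q := √(∑ i, ‖φ (S i).1‖ ^ 2)
  have hw' : norm2p p w' ≤ Λ :=
    (norm2p_le_norm2p_of_norm_le hp₀.le fun j => V.norm_starProjection_apply_le (w j)).trans hw
  have hint : Integrable (marginLoss ℓ φ w') P :=
    .of_bound (measurable_marginLoss hφ hℓ w').aestronglyMeasurable B <| ae_of_all _ fun z => by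
      exact (norm_of_nonneg (hℓ₀ _)).trans_le <| hB w' hw' z
  have hemp : ∑ i, marginLoss ℓ φ w' (S i) ≤ ∑ i, marginLoss ℓ φ w (S i) + 2 * L * (Λ * Q) := by
    grw [sum_marginLoss_starProjection_le hc hℓ hS w, sqrt_sum_norm_sq_le_norm2p hp₀ hp₂ w, hw]
  calc P.real {z | mcMargin (linearScore φ w) z.1 z.2 ≤ 0}
      = P.real {z | mcMargin (linearScore φ w') z.1 z.2 ≤ 0} :=
        measureReal_mcMargin_nonpos_congr fun j =>
          hV _ (V.sub_starProjection_mem_orthogonal (w j))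
    _ ≤ ∫ z, marginLoss ℓ φ w' z ∂P := measureReal_mcMargin_nonpos_le_integral hφ hℓ₀ hℓ₁ hint
    _ ≤ 1 / (n : ℝ) * (∑ i, marginLoss ℓ φ w (S i) + 2 * L * (Λ * Q)) + t +
          2 / n * (2 * L * Λ * (a * Q)) := by
        grw [ha w' (fun j => V.starProjection_apply_mem (w j)) hw', hemp]
    _ = _ := by ring

theorem measure_exists_mem_lt_integral_marginLoss_le [IsProbabilityMeasure P] (hn : 0 < n)
    (hc : 2 ≤ c) (hφ : Measurable φ) (hℓ₀ : ∀ t, 0 ≤ ℓ t) (hℓ : LipschitzWith L ℓ)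
    (hrq : r.HolderConjugate q) (hq : 2 * log 2 ≤ q) (hB : 0 < B) {W : Set (Fin c → E)}
    (hW : IsSeparable W) (hWΛ : ∀ w ∈ W, norm2p r w ≤ Λ)
    (hWB : ∀ w ∈ W, ∀ z, marginLoss ℓ φ w z ≤ B) {ε : ℝ} (hε : 0 ≤ ε) :
    Measure.pi (fun _ : Fin n => P)
      {S | ∃ w ∈ W, 1 / (n : ℝ) * ∑ i, marginLoss ℓ φ w (S i) + 3 * B * ε +
        2 / n * (2 * L * Λ * ((c : ℝ) ^ (1 / q) * √q * √(∑ i, ‖φ (S i).1‖ ^ 2))) <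
          ∫ z, marginLoss ℓ φ w z ∂P} ≤ ENNReal.ofReal (exp (-(2 * n * ε ^ 2))) := by
  lift B to ℝ≥0 using hB.le
  refine measure_exists_mem_lt_integral_le (F := marginLoss ℓ φ) (R := fun S => 2 * L * Λ *
    ((c : ℝ) ^ (1 / q) * √q * √(∑ i, ‖φ (S i).1‖ ^ 2))) hW hn (mod_cast hB)
    (measurable_marginLoss hφ hℓ) (continuous_marginLoss hc hℓ)
    (fun w hw z => ⟨hℓ₀ _, hWB w hw z⟩) (fun N u hu S => ?_) hε
  rw [mul_assoc (_ ^ _), ← sqrt_mul hrq.symm.pos.le]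
  exact rademacherSum_marginLoss_le hc hℓ hrq hq (fun m => hWΛ _ (hu m)) S

theorem lp_norm_multiclass_svm_generalization_bound_general [CompleteSpace E]
    [IsProbabilityMeasure P] (hn : 1 ≤ n) (hc : 2 ≤ c) (hφ : Measurable φ) (hp₀ : 0 < p)
    (hp₂ : p ≤ 2) (hΛ : 0 ≤ Λ) (hℓ₁ : ∀ t ≤ 0, 1 ≤ ℓ t) (hℓ₀ : ∀ t, 0 ≤ ℓ t)
    (hℓ : LipschitzWith L ℓ) (hB : ∀ w : Fin c → E, norm2p p w ≤ Λ → ∀ z, marginLoss ℓ φ w z ≤ B)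
    {δ : ℝ} (hδ : δ ∈ Set.Ioo (0 : ℝ) 1) :
    ENNReal.ofReal (1 - δ) ≤ Measure.pi (fun _ : Fin n => P)
      {S | ∀ w : Fin c → E, norm2p p w ≤ Λ →
        P.real {z | mcMargin (linearScore φ w) z.1 z.2 ≤ 0} ≤
          1 / (n : ℝ) * ∑ i, marginLoss ℓ φ w (S i) + 3 * B * √(log (2 / δ) / (2 * n)) +
            2 * L * Λ / n * √(∑ i, ‖φ (S i).1‖ ^ 2) * classConstant c p} := by
  obtain ⟨r, q, hrq, hpr, hq, hK⟩ := exists_holderConjugate_le_classConstant hc hp₂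
  obtain ⟨V, hVclosed, hVsep, hV⟩ :=
    exists_isSeparable_forall_mem_orthogonal_ae_inner_eq_zero (μ := P) (hφ.comp measurable_fst)
  have := hVclosed.completeSpace_coe
  have hB₀ : 0 < B := by
    obtain ⟨z⟩ := P.nonempty_of_neZero
    refine (zero_lt_one.trans_le (hℓ₁ _ ?_)).trans_le (hB 0 ((norm2p_zero hp₀.ne').trans_le hΛ) z)
    simp [mcMargin, linearScore]
  have hW : IsSeparable {w : Fin c → E | (∀ j, w j ∈ V) ∧ norm2p p w ≤ Λ} :=
    (IsSeparable.univ_pi fun _ => hVsep).mono fun w hw j _ => hw.1 j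
  have hbad := measure_exists_mem_lt_integral_marginLoss_le (P := P) hn hc hφ hℓ₀ hℓ hrq hq hB₀ hW
    (fun w hw => (norm2p_anti hp₀ hpr w).trans hw.2) (fun w hw => hB w hw.2)
    (sqrt_nonneg (log (2 / δ) / (2 * n)))
  rw [exp_neg_two_mul_sqrt_log_div_sq hn hδ.1 (hδ.2.le.trans one_le_two)] at hbad
  refine ofReal_one_sub_le_measure_of_subset_union hδ.1.le
    (measure_pi_setOf_pairwise_inner_starProjection_eq_one hV n) (fun S hS => ?_)
    (hbad.trans (ENNReal.ofReal_le_ofReal (half_le_self hδ.1.le)))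
  refine or_iff_not_imp_right.2 fun hgood w hw => ?_
  simp only [Set.mem_ofPred_eq, not_exists, not_and, not_lt] at hgood
  grw [measureReal_mcMargin_nonpos_le_of_starProjection hc hφ hℓ₀ hℓ₁ hℓ hp₀ hp₂ hB hV hS
    (fun w' hV' hw' => hgood w' ⟨hV', hw'⟩) hw, hK]

end GeneralizationBound

/-- **`ℓ_p`-norm multi-class SVM generalization bound** (Corollary 4). -/
theorem lp_norm_multiclass_svm_generalization_bound
    {X E : Type*} [MeasurableSpace X] [NormedAddCommGroup E] [InnerProductSpace ℝ E]
    [CompleteSpace E] [MeasurableSpace E] [BorelSpace E]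
    (n c : ℕ) (hn : 1 ≤ n) (hc : 2 ≤ c)
    (P : Measure (X × Fin c)) [IsProbabilityMeasure P]
    (φ : X → E) (hφ : Measurable φ)
    (p : ℝ) (hp₁ : 1 ≤ p) (hp₂ : p ≤ 2) (Λ : ℝ) (hΛ : 0 < Λ)
    (ℓ : ℝ → ℝ) (L : ℝ)
    (hℓ₁ : ∀ t ≤ (0 : ℝ), 1 ≤ ℓ t) (hℓ₀ : ∀ t, 0 ≤ ℓ t)
    (hℓLip : ∀ t₁ t₂, |ℓ t₁ - ℓ t₂| ≤ L * |t₁ - t₂|)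
    (hℓanti : ∀ s t : ℝ, s ≤ t → ℓ t ≤ ℓ s)
    (hℓzero : ∃ cℓ : ℝ, ℓ cℓ = 0)
    (B : ℝ) (hB : ∀ w : Fin c → E, norm2p p w ≤ Λ →
      ∀ (x : X) (y : Fin c), ℓ (mcMargin (fun x' j => ⟪w j, φ x'⟫) x y) ≤ B)
    (δ : ℝ) (hδ : δ ∈ Set.Ioo (0 : ℝ) 1) :
    ENNReal.ofReal (1 - δ) ≤
      (Measure.pi fun _ : Fin n => P)
        {S : Fin n → X × Fin c | ∀ w : Fin c → E, norm2p p w ≤ Λ →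
          (P {z : X × Fin c | mcMargin (fun x' j => ⟪w j, φ x'⟫) z.1 z.2 ≤ 0}).toReal ≤
            (1 / (n : ℝ)) * ∑ i, ℓ (mcMargin (fun x' j => ⟪w j, φ x'⟫) (S i).1 (S i).2)
            + 3 * B * Real.sqrt (Real.log (2 / δ) / (2 * n))
            + (2 * L * Λ / n) * Real.sqrt (∑ i, ‖φ (S i).1‖ ^ 2) *
              (if p ≤ (2 * Real.log c) / (2 * Real.log c - 1) then
                Real.sqrt (Real.exp 1) * (4 * Real.log c) ^ (1 + 1 / (2 * Real.log c))
              else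
                (2 * p / (p - 1)) ^ (2 - 1 / p) * (c : ℝ) ^ ((p - 1) / p))} := by
  lift L to ℝ≥0 using by simpa using (abs_nonneg _).trans (hℓLip 1 0)
  exact lp_norm_multiclass_svm_generalization_bound_general hn hc hφ (zero_lt_one.trans_le hp₁) hp₂
    hΛ.le hℓ₁ hℓ₀ (LipschitzWith.of_dist_le_mul hℓLip) (fun w hw z => hB w hw z.1 z.2) hδ
end

section
/- Let X be a set, let n, c ≥ 1, let (x_1,y_1),…,(x_n,y_n) ∈ X × {1,…,c}, let θ > 0, and let H be a nonempty countable set of functions h : X → ℝ^c. For h ∈ H define ρ_{θ,h}(x,y) = min(ρ_h(x,y), θ). Assume the suprema below are integrable. Then the empirical Rademacher complexity of the class {(x,y) ↦ ρ_{θ,h}(x,y) : h ∈ H} satisfies E_σ[sup_{h∈H} (1/n) Σ_{i=1}^n σ_i ρ_{θ,h}(x_i,y_i)] ≤ (√(2π)/n) · E_g[sup_{h∈H} Σ_{i=1}^n Σ_{j=1}^c g_{ij} h_j(x_i)], where σ_1,…,σ_n are i.i.d. Rademacher random variables (uniform on {−1,+1}) and g_{ij} are i.i.d. standard Gaussian N(0,1)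 random variables. -/
open MeasureTheory ProbabilityTheory Real

/-- The Rademacher sign corresponding to a Boolean. -/
def radSign (b : Bool) : ℝ := if b then 1 else -1

/-!
Rademacher signs are traded for Gaussian vectors one coordinate at a time, all other coordinates
being absorbed into an offset `R`. Let `μ` be a symmetric measure, `φ_s` odd functions, and
`Ψ g = sup_s (φ_s g + R_s)`. Choosing the sign of `g` in favour of the larger term gives
`|φ_s g - φ_t g| + R_s + R_t ≤ Ψ g + Ψ (-g)`. Hence if `f_s - f_t ≤ ∫ |φ_s - φ_t| ∂μ`, then
`sup_s (f_s + R_s) + sup_t (-f_t + R_t) ≤ 2 ∫ Ψ ∂μ`.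

For a standard Gaussian `g` in a Euclidean space, `E |⟪w, g⟫| = √(2/π) ‖w‖`, so a family `f_s` that
is `L`-Lipschitz in vectors `v_s` is dominated by `φ_s g = L √(π/2) ⟪v_s, g⟫`. The truncated margin
is `2`-Lipschitz in the score vector `h x`, and `2 √(π/2) = √(2π)`.

Suprema of uniformly Lipschitz families, even uncountable ones, are Lipschitz, hence measurable and
integrable.
-/

open scoped NNReal RealInnerProductSpace

section LipschitzSupremum

variable {ι α : Type*} [PseudoMetricSpace α] {F : ι → α → ℝ} {K : ℝ≥0}

lemma bddAbove_range_of_lipschitzWith (hF : ∀ s, LipschitzWith K (F s)) {a : α}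
    (ha : BddAbove (Set.range fun s => F s a)) (b : α) :
    BddAbove (Set.range fun s => F s b) := by
  obtain ⟨M, hM⟩ := ha
  refine ⟨M + K * dist b a, Set.forall_mem_range.2 fun s => ?_⟩
  exact ((hF s).le_add_mul b a).trans (by gcongr; exact hM ⟨s, rfl⟩)

lemma lipschitzWith_iSup (hF : ∀ s, LipschitzWith K (F s)) {a : α}
    (ha : BddAbove (Set.range fun s => F s a)) : LipschitzWith K fun b => ⨆ s, F s b := by
  rcases isEmpty_or_nonempty ι with _ | _
  · simpa only [Real.iSup_of_isEmpty] using (LipschitzWith.const 0).weaken zero_le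
  refine LipschitzWith.of_le_add_mul K fun b b' => ciSup_le fun s => ?_
  calc F s b ≤ F s b' + K * dist b b' := (hF s).le_add_mul b b'
    _ ≤ (⨆ s, F s b') + K * dist b b' := by
      gcongr
      exact le_ciSup (bddAbove_range_of_lipschitzWith hF ha b') s

lemma lipschitzWith_sum_eval_add {κ : Type*} [Fintype κ] {φ : κ → α → ℝ}
    (hφ : ∀ i, LipschitzWith K (φ i)) (r : ℝ) :
    LipschitzWith (Fintype.card κ * K) fun g : κ → α => ∑ i, φ i (g i) + r := by
  refine LipschitzWith.of_le_add_mul _ fun g g' => ?_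
  calc ∑ i, φ i (g i) + r ≤ ∑ i, (φ i (g' i) + K * dist g g') + r := by
        gcongr with i
        exact ((hφ i).le_add_mul _ _).trans (by gcongr; exact dist_le_pi_dist g g' i)
    _ = ∑ i, φ i (g' i) + r + ↑(Fintype.card κ * K) * dist g g' := by
        simp only [Finset.sum_add_distrib, Finset.sum_const, Finset.card_univ, nsmul_eq_mul,
          NNReal.coe_mul, NNReal.coe_natCast]
        ring

end LipschitzSupremum

section LipschitzIntegrable

variable {E : Type*} [NormedAddCommGroup E] [MeasurableSpace E] [BorelSpace E]
  {μ : Measure E} [IsFiniteMeasure μ] {K : ℝ≥0}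

lemma integrable_of_lipschitzWith {f : E → ℝ} (hf : LipschitzWith K f)
    (hμ : Integrable (fun g => g) μ) : Integrable f μ := by
  refine ((hμ.norm.const_mul (K : ℝ)).add (integrable_const |f 0|)).mono'
    hf.continuous.aestronglyMeasurable (ae_of_all _ fun g => ?_)
  have h_dist := hf.norm_sub_le g 0
  rw [sub_zero] at h_dist
  exact (norm_le_norm_sub_add (f g) (f 0)).trans (add_le_add h_dist le_rfl)

lemma isBounded_range_of_sub_le_integral_abs_sub {ι : Type*} {f : ι → ℝ} {φ : ι → E → ℝ}
    (hμ : Integrable (fun g => g) μ) (hφ : ∀ s, LipschitzWith K (φ s))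
    (hφ_odd : ∀ s, (φ s).Odd) (hf : ∀ s t, f s - f t ≤ ∫ g, |φ s g - φ t g| ∂μ) :
    Bornology.IsBounded (Set.range f) := by
  have hφ_norm (s : ι) (g : E) : |φ s g| ≤ K * ‖g‖ :=
    (hφ s).norm_le_mul (hφ_odd s).map_zero g
  have hf_le (s t : ι) : f s - f t ≤ ∫ g, 2 * (K * ‖g‖) ∂μ := by
    refine (hf s t).trans (integral_mono ?_ ((hμ.norm.const_mul _).const_mul _) fun g => ?_)
    · exact ((integrable_of_lipschitzWith (hφ s) hμ).sub
        (integrable_of_lipschitzWith (hφ t) hμ)).abs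
    · linarith [abs_sub (φ s g) (φ t g), hφ_norm s g, hφ_norm t g]
  exact Metric.isBounded_range_iff.2
    ⟨_, fun s t => abs_sub_le_iff.2 ⟨hf_le s t, hf_le t s⟩⟩

end LipschitzIntegrable

lemma measurePreserving_fin_cons {E : Type*} [MeasurableSpace E] (μ : Measure E) [SigmaFinite μ]
    (n : ℕ) :
    MeasurePreserving (fun p : E × (Fin n → E) => (Fin.cons p.1 p.2 : Fin (n + 1) → E))
      (μ.prod (Measure.pi fun _ => μ)) (Measure.pi fun _ => μ) := by
  convert (measurePreserving_piFinSuccAbove (fun _ : Fin (n + 1) => μ) 0).symm using 2 with p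
  exact (Fin.insertNth_zero' p.1 p.2).symm

lemma integral_pi_fin_succ {E F : Type*} [MeasurableSpace E] [NormedAddCommGroup F]
    [NormedSpace ℝ F] {μ : Measure E} [SigmaFinite μ] {n : ℕ} {G : (Fin (n + 1) → E) → F}
    (hG : Integrable G (Measure.pi fun _ => μ)) :
    ∫ g, G g ∂Measure.pi (fun _ => μ) =
      ∫ g : Fin n → E, ∫ a, G (Fin.cons a g) ∂μ ∂Measure.pi fun _ => μ := by
  have h_cons := measurePreserving_fin_cons μ n
  calc ∫ g, G g ∂Measure.pi (fun _ => μ)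
      = ∫ p : E × (Fin n → E), G (Fin.cons p.1 p.2) ∂μ.prod (Measure.pi fun _ => μ) := by
        rw [← h_cons.map_eq, integral_map h_cons.aemeasurable
          (h_cons.map_eq ▸ hG.aestronglyMeasurable)]
    _ = ∫ g : Fin n → E, ∫ a, G (Fin.cons a g) ∂μ ∂Measure.pi fun _ => μ :=
        integral_prod_symm _ ((h_cons.integrable_comp hG.aestronglyMeasurable).2 hG)

lemma sum_radSign_succ {M : Type*} [AddCommMonoid M] {n : ℕ} (G : (Fin (n + 1) → ℝ) → M) :
    ∑ σ : Fin (n + 1) → Bool, G (fun i => radSign (σ i)) =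
      ∑ σ : Fin n → Bool,
        (G (Fin.cons 1 fun i => radSign (σ i)) + G (Fin.cons (-1) fun i => radSign (σ i))) := by
  rw [← (Fin.consEquiv fun _ => Bool).sum_comp, Fintype.sum_prod_type_right]
  refine Finset.sum_congr rfl fun σ _ => ?_
  rw [Fintype.sum_bool]
  congr 2 <;> funext i <;> cases i using Fin.cases <;> simp [Fin.consEquiv, radSign]

lemma sum_iSup_radSign_succ {ι : Type*} {n : ℕ} (f : Fin (n + 1) → ι → ℝ) (R : ι → ℝ) :
    ∑ σ : Fin (n + 1) → Bool, ⨆ s, (∑ i, radSign (σ i) * f i s + R s) =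
      (∑ σ : Fin n → Bool, ⨆ s, (∑ i, radSign (σ i) * f i.succ s + (f 0 s + R s))) +
        ∑ σ : Fin n → Bool, ⨆ s, (∑ i, radSign (σ i) * f i.succ s + (-f 0 s + R s)) := by
  rw [sum_radSign_succ fun ε => ⨆ s, (∑ i, ε i * f i s + R s), Finset.sum_add_distrib]
  simp only [Fin.sum_univ_succ, Fin.cons_zero, Fin.cons_succ, one_mul, neg_mul, add_assoc,
    add_left_comm]

section Contraction

variable {ι E : Type*} [NormedAddCommGroup E] {K : ℝ≥0}

lemma bddAbove_range_sum_add {κ : Type*} [Fintype κ] {φ : κ → ι → E → ℝ} {R : ι → ℝ}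
    (hφ : ∀ i s, LipschitzWith K (φ i s)) (hφ_odd : ∀ i s, (φ i s).Odd)
    (hR : BddAbove (Set.range R)) (g : κ → E) :
    BddAbove (Set.range fun s => ∑ i, φ i s (g i) + R s) := by
  refine bddAbove_range_of_lipschitzWith (F := fun s (g : κ → E) => ∑ i, φ i s (g i) + R s)
    (fun s => lipschitzWith_sum_eval_add (hφ · s) (R s)) (a := 0) ?_ g
  simpa only [Pi.zero_apply, (hφ_odd _ _).map_zero, Finset.sum_const_zero, zero_add] using hR

variable [MeasurableSpace E] [BorelSpace E] {μ : Measure E} [IsProbabilityMeasure μ]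

lemma integrable_iSup_sum_add [SecondCountableTopology E] {κ : Type*} [Fintype κ]
    {φ : κ → ι → E → ℝ} {R : ι → ℝ}
    (hμ : Integrable (fun g => g) μ) (hφ : ∀ i s, LipschitzWith K (φ i s))
    (hφ_odd : ∀ i s, (φ i s).Odd) (hR : BddAbove (Set.range R)) :
    Integrable (fun g : κ → E => ⨆ s, (∑ i, φ i s (g i) + R s)) (Measure.pi fun _ => μ) := by
  have h_lip := lipschitzWith_iSup (fun s => lipschitzWith_sum_eval_add (hφ · s) (R s))
    (bddAbove_range_sum_add hφ hφ_odd hR 0)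
  exact integrable_of_lipschitzWith h_lip (integrable_pi_iff.2 fun _ => integrable_eval hμ)

variable [Nonempty ι] [μ.IsNegInvariant]

lemma iSup_add_iSup_neg_le_integral_iSup {f R : ι → ℝ} {φ : ι → E → ℝ}
    (hμ : Integrable (fun g => g) μ) (hφ : ∀ s, LipschitzWith K (φ s))
    (hφ_odd : ∀ s, (φ s).Odd) (hR : BddAbove (Set.range R))
    (hf : ∀ s t, f s - f t ≤ ∫ g, |φ s g - φ t g| ∂μ) :
    (⨆ s, (f s + R s)) + (⨆ s, (-f s + R s)) ≤ 2 * ∫ g, ⨆ s, (φ s g + R s) ∂μ := by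
  set Ψ : E → ℝ := fun g => ⨆ s, (φ s g + R s)
  have hφR (s : ι) : LipschitzWith K fun g => φ s g + R s := by
    simpa using (hφ s).add (LipschitzWith.const (R s))
  have hbdd_zero : BddAbove (Set.range fun s => φ s 0 + R s) := by
    simpa only [(hφ_odd _).map_zero, zero_add] using hR
  have hbdd := bddAbove_range_of_lipschitzWith hφR hbdd_zero
  have hΨ_int : Integrable Ψ μ :=
    integrable_of_lipschitzWith (lipschitzWith_iSup hφR hbdd_zero) hμ
  have h_pointwise (s t : ι) (g : E) : |φ s g - φ t g| + (R s + R t) ≤ Ψ g + Ψ (-g) := by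
    have hΨ_ge (u : ι) (a : E) : φ u a + R u ≤ Ψ a := le_ciSup (hbdd a) u
    have hneg_s := hΨ_ge s (-g)
    have hneg_t := hΨ_ge t (-g)
    rw [hφ_odd] at hneg_s hneg_t
    rcases abs_cases (φ s g - φ t g) with ⟨h_abs, -⟩ | ⟨h_abs, -⟩ <;> rw [h_abs] <;>
      linarith [hΨ_ge s g, hΨ_ge t g]
  have h_pair (s t : ι) : (f s + R s) + (-f t + R t) ≤ 2 * ∫ g, Ψ g ∂μ := by
    have hφ_int : Integrable (fun g => |φ s g - φ t g|) μ :=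
      ((integrable_of_lipschitzWith (hφ s) hμ).sub
        (integrable_of_lipschitzWith (hφ t) hμ)).abs
    calc (f s + R s) + (-f t + R t) ≤ ∫ g, |φ s g - φ t g| ∂μ + (R s + R t) := by
          linarith [hf s t]
      _ = ∫ g, (|φ s g - φ t g| + (R s + R t)) ∂μ := by
          simp [integral_add hφ_int (integrable_const _)]
      _ ≤ ∫ g, (Ψ g + Ψ (-g)) ∂μ :=
          integral_mono (hφ_int.add (integrable_const _)) (hΨ_int.add hΨ_int.comp_neg)
            (h_pointwise s t)
      _ = 2 * ∫ g, Ψ g ∂μ := by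
          rw [integral_add hΨ_int hΨ_int.comp_neg, integral_neg_eq_self, two_mul]
  exact ciSup_add_ciSup_le h_pair

variable [SecondCountableTopology E] {n : ℕ} {R : ι → ℝ}

lemma integral_iSup_add_integral_iSup_neg_le {f : ι → ℝ} {φ : Fin (n + 1) → ι → E → ℝ}
    (hμ : Integrable (fun g => g) μ) (hφ : ∀ i s, LipschitzWith K (φ i s))
    (hφ_odd : ∀ i s, (φ i s).Odd) (hR : BddAbove (Set.range R))
    (hf : ∀ s t, f s - f t ≤ ∫ g, |φ 0 s g - φ 0 t g| ∂μ) :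
    (∫ g, ⨆ s, (∑ i : Fin n, φ i.succ s (g i) + (f s + R s)) ∂Measure.pi fun _ => μ) +
        ∫ g, ⨆ s, (∑ i : Fin n, φ i.succ s (g i) + (-f s + R s)) ∂Measure.pi (fun _ => μ) ≤
      2 * ∫ g, ⨆ s, (∑ i, φ i s (g i) + R s) ∂Measure.pi fun _ => μ := by
  have hf_bdd := isBounded_range_of_sub_le_integral_abs_sub hμ (hφ 0) (hφ_odd 0) hf
  have h_pos_int := integrable_iSup_sum_add hμ (fun i : Fin n => hφ i.succ)
    (fun i => hφ_odd i.succ) (hf_bdd.bddAbove.range_add hR)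
  have h_neg_int := integrable_iSup_sum_add hμ (fun i : Fin n => hφ i.succ)
    (fun i => hφ_odd i.succ) (hf_bdd.bddBelow.range_neg.range_add hR)
  have h_int := integrable_iSup_sum_add hμ hφ hφ_odd hR
  have h_inner_int := ((measurePreserving_fin_cons μ n).integrable_comp
    h_int.aestronglyMeasurable).2 h_int |>.integral_prod_right
  rw [← integral_add h_pos_int h_neg_int, integral_pi_fin_succ h_int, ← integral_const_mul]
  refine integral_mono (h_pos_int.add h_neg_int) (h_inner_int.const_mul 2) fun g => ?_
  have h_offset : BddAbove (Set.range fun s => ∑ i : Fin n, φ i.succ s (g i) + R s) :=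
    bddAbove_range_sum_add (fun i => hφ i.succ) (fun i => hφ_odd i.succ) hR g
  simpa only [Function.comp_apply, Fin.sum_univ_succ, Fin.cons_zero, Fin.cons_succ, add_assoc,
    add_left_comm]
    using iSup_add_iSup_neg_le_integral_iSup hμ (hφ 0) (hφ_odd 0) h_offset hf

lemma sum_iSup_radSign_le_integral_iSup {f : Fin n → ι → ℝ} {φ : Fin n → ι → E → ℝ}
    (hμ : Integrable (fun g => g) μ) (hφ : ∀ i s, LipschitzWith K (φ i s))
    (hφ_odd : ∀ i s, (φ i s).Odd) (hR : BddAbove (Set.range R))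
    (hf : ∀ i s t, f i s - f i t ≤ ∫ g, |φ i s g - φ i t g| ∂μ) :
    ∑ σ : Fin n → Bool, ⨆ s, (∑ i, radSign (σ i) * f i s + R s) ≤
      2 ^ n * ∫ g, ⨆ s, (∑ i, φ i s (g i) + R s) ∂Measure.pi fun _ => μ := by
  induction n generalizing R with
  | zero => simp
  | succ n ih =>
    have hf_bdd := isBounded_range_of_sub_le_integral_abs_sub hμ (hφ 0) (hφ_odd 0) (hf 0)
    have ih_tail {Q : ι → ℝ} (hQ : BddAbove (Set.range Q)) :=
      ih (fun i => hφ i.succ) (fun i => hφ_odd i.succ) hQ fun i => hf i.succ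
    rw [sum_iSup_radSign_succ]
    refine (add_le_add (ih_tail (hf_bdd.bddAbove.range_add hR))
      (ih_tail (hf_bdd.bddBelow.range_neg.range_add hR))).trans ?_
    rw [← mul_add, pow_succ, mul_assoc]
    gcongr
    exact integral_iSup_add_integral_iSup_neg_le hμ hφ hφ_odd hR (hf 0)

end Contraction

lemma integral_abs_gaussianReal : ∫ x, |x| ∂gaussianReal 0 1 = √(2 / π) := by
  have h_half : ∫ x in Set.Ioi (0 : ℝ), x * rexp (-(1 / 2) * x ^ 2) = 1 := by
    have h := integral_rpow_mul_exp_neg_mul_rpow (p := 2) (q := 1) (b := 1 / 2)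
      (by norm_num) (by norm_num) (by norm_num)
    simp only [Real.rpow_one, Real.rpow_two] at h
    rw [h]
    norm_num
  rw [integral_gaussianReal_eq_integral_smul one_ne_zero]
  calc ∫ x, gaussianPDFReal 0 1 x • |x|
      = ∫ x, (√(2 * π))⁻¹ * (|x| * rexp (-(1 / 2) * |x| ^ 2)) := by
        refine integral_congr_ae (ae_of_all _ fun x => ?_)
        simp only [gaussianPDFReal, NNReal.coe_one, mul_one, sub_zero, smul_eq_mul, sq_abs]
        ring_nf
    _ = 2 * (√(2 * π))⁻¹ := by
        rw [integral_const_mul, integral_comp_abs (f := fun x => x * rexp (-(1 / 2) * x ^ 2)),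
          h_half]
        ring
    _ = √(2 / π) := by
        rw [← div_eq_mul_inv, eq_comm, Real.sqrt_eq_iff_mul_self_eq (by positivity) (by positivity),
          div_mul_div_comm, Real.mul_self_sqrt (by positivity)]
        field_simp

section StdGaussian

variable {E : Type*} [NormedAddCommGroup E] [InnerProductSpace ℝ E] [FiniteDimensional ℝ E]
  [MeasurableSpace E] [BorelSpace E]

instance isNegInvariant_stdGaussian : (stdGaussian E).IsNegInvariant :=
  ⟨stdGaussian_map (LinearIsometryEquiv.neg ℝ)⟩

lemma integral_abs_inner_stdGaussian (w : E) :
    ∫ g, |⟪w, g⟫| ∂stdGaussian E = √(2 / π) * ‖w‖ := by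
  have h_map : (stdGaussian E).map (innerSL ℝ w) = (gaussianReal 0 1).map (‖w‖ * ·) := by
    rw [IsGaussian.map_eq_gaussianReal, integral_strongDual_stdGaussian, variance_dual_stdGaussian,
      innerSL_apply_norm, gaussianReal_map_const_mul]
    congr 1
    · simp
    · ext; simp
  calc ∫ g, |⟪w, g⟫| ∂stdGaussian E = ∫ x, |x| ∂(stdGaussian E).map (innerSL ℝ w) :=
        (integral_map (by fun_prop) (by fun_prop)).symm
    _ = ∫ x, |‖w‖ * x| ∂gaussianReal 0 1 := by
        rw [h_map, integral_map (by fun_prop) (by fun_prop)]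
    _ = √(2 / π) * ‖w‖ := by
        simp only [abs_mul, abs_norm, integral_const_mul, integral_abs_gaussianReal]
        exact mul_comm _ _

lemma sum_iSup_radSign_le_integral_iSup_inner {ι : Type*} [Nonempty ι] {n : ℕ} {L : ℝ}
    {f : Fin n → ι → ℝ} {v : Fin n → ι → E} (hL : 0 ≤ L)
    (hv : ∀ i, Bornology.IsBounded (Set.range (v i)))
    (hf : ∀ i s t, f i s - f i t ≤ L * ‖v i s - v i t‖) :
    ∑ σ : Fin n → Bool, ⨆ s, ∑ i, radSign (σ i) * f i s ≤
      2 ^ n * (L * √(π / 2) *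
        ∫ g, ⨆ s, ∑ i, ⟪v i s, g i⟫ ∂Measure.pi fun _ => stdGaussian E) := by
  set C := L * √(π / 2) with hC
  obtain ⟨B, hB⟩ := (Bornology.isBounded_iUnion.2 hv).exists_norm_le
  have hv_norm (i : Fin n) (s : ι) : ‖v i s‖ ≤ B :=
    hB _ (Set.mem_iUnion.2 ⟨i, s, rfl⟩)
  let φ (i : Fin n) (s : ι) (g : E) : ℝ := C * ⟪v i s, g⟫
  have hφ (i : Fin n) (s : ι) : LipschitzWith (C * B).toNNReal (φ i s) := by
    refine LipschitzWith.of_dist_le' fun g g' => ?_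
    calc dist (φ i s g) (φ i s g') = C * |⟪v i s, g - g'⟫| := by
          rw [Real.dist_eq, inner_sub_right, ← mul_sub, abs_mul, abs_of_nonneg (by positivity)]
      _ ≤ C * (‖v i s‖ * ‖g - g'‖) := by gcongr; exact abs_real_inner_le_norm _ _
      _ ≤ C * (B * dist g g') := by rw [dist_eq_norm]; gcongr; exact hv_norm i s
      _ = C * B * dist g g' := (mul_assoc C B _).symm
  have hf_le_integral (i : Fin n) (s t : ι) :
      f i s - f i t ≤ ∫ g, |φ i s g - φ i t g| ∂stdGaussian E := by
    refine (hf i s t).trans_eq ?_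
    have h_one : √(π / 2) * √(2 / π) = 1 := by
      rw [← Real.sqrt_mul (by positivity), div_mul_div_cancel₀ two_ne_zero, div_self pi_ne_zero,
        Real.sqrt_one]
    simp only [φ, ← mul_sub, ← inner_sub_left, abs_mul, integral_const_mul,
      integral_abs_inner_stdGaussian]
    rw [abs_of_nonneg (by positivity), hC, ← mul_assoc, mul_assoc L, h_one, mul_one]
  have h_main := sum_iSup_radSign_le_integral_iSup (R := fun _ : ι => 0)
    (IsGaussian.integrable_id (μ := stdGaussian E)) hφ
    (fun i s g => by simp only [φ, inner_neg_right, mul_neg]) (by simp) hf_le_integral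
  simpa only [φ, add_zero, ← Finset.mul_sum,
    ← Real.mul_iSup_of_nonneg (show 0 ≤ C by positivity), integral_const_mul] using h_main

end StdGaussian

lemma measurePreserving_curry_toLp_gaussianReal (ι κ : Type*) [Fintype ι] [Fintype κ] :
    MeasurePreserving
      ((MeasurableEquiv.curry ι κ ℝ).trans
        (MeasurableEquiv.piCongrRight fun _ => MeasurableEquiv.toLp 2 (κ → ℝ)))
      (Measure.pi fun _ => gaussianReal 0 1)
      (Measure.pi fun _ => stdGaussian (EuclideanSpace ℝ κ)) := by
  have h_curry : MeasurePreserving (MeasurableEquiv.curry ι κ ℝ)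
      (Measure.pi fun _ => gaussianReal 0 1)
      (Measure.pi fun _ => Measure.pi fun _ => gaussianReal 0 1) := by
    refine ⟨(MeasurableEquiv.curry ι κ ℝ).measurable, ?_⟩
    simpa only [Measure.infinitePi_eq_pi] using
      Measure.infinitePi_map_curry (fun (_ : ι) (_ : κ) => gaussianReal 0 1)
  have h_toLp : MeasurePreserving (MeasurableEquiv.toLp 2 (κ → ℝ))
      (Measure.pi fun _ => gaussianReal 0 1) (stdGaussian (EuclideanSpace ℝ κ)) :=
    ⟨(MeasurableEquiv.toLp 2 (κ → ℝ)).measurable, map_pi_eq_stdGaussian⟩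
  exact (measurePreserving_pi _ _ fun _ => h_toLp).comp h_curry

lemma integral_pi_gaussianReal_prod {ι κ F : Type*} [Fintype ι] [Fintype κ]
    [NormedAddCommGroup F] [NormedSpace ℝ F] (G : (ι → EuclideanSpace ℝ κ) → F) :
    ∫ g : ι × κ → ℝ, G (fun i => WithLp.toLp 2 fun j => g (i, j))
        ∂(Measure.pi fun _ => gaussianReal 0 1) =
      ∫ g, G g ∂Measure.pi fun _ => stdGaussian (EuclideanSpace ℝ κ) :=
  (measurePreserving_curry_toLp_gaussianReal ι κ).integral_comp' G

lemma isBounded_range_of_forall_bddAbove_dotProduct {ι κ : Type*} [Fintype κ] {V : ι → κ → ℝ}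
    (hV : ∀ g : κ → ℝ, BddAbove (Set.range fun s => g ⬝ᵥ V s)) :
    Bornology.IsBounded (Set.range V) := by
  classical
  refine Bornology.forall_isBounded_image_eval_iff.1 fun p => ?_
  rw [← Set.range_comp, isBounded_iff_bddBelow_bddAbove]
  constructor
  · have h_neg := hV (Pi.single p (-1))
    simp only [single_dotProduct, neg_mul, one_mul] at h_neg
    simpa [Function.comp_def] using h_neg.range_neg
  · simpa only [single_dotProduct, one_mul, Function.comp_def, Function.eval] using
      hV (Pi.single p 1)

lemma lipschitzWith_sub_iSup_ne {κ : Type*} [Fintype κ] (y : κ) :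
    LipschitzWith 2 fun a : κ → ℝ => a y - ⨆ y' : {y' // y' ≠ y}, a y' := by
  rw [← one_add_one_eq_two]
  exact (LipschitzWith.eval y).sub
    (lipschitzWith_iSup (fun y' => LipschitzWith.eval y'.1) (Set.finite_range _).bddAbove (a := 0))

lemma min_mcMargin_sub_min_mcMargin_le {X : Type*} {c : ℕ} (h h' : X → Fin c → ℝ) (x : X)
    (y : Fin c) (θ : ℝ) :
    min (mcMargin h x y) θ - min (mcMargin h' x y) θ ≤
      2 * ‖WithLp.toLp 2 (h x) - WithLp.toLp 2 (h' x)‖ := by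
  have h_lip := ((lipschitzWith_sub_iSup_ne y).min_const θ).comp (PiLp.lipschitzWith_ofLp 2 _)
  have h_le := h_lip.dist_le_mul (WithLp.toLp 2 (h x)) (WithLp.toLp 2 (h' x))
  rw [mul_one, dist_eq_norm] at h_le
  exact (le_abs_self _).trans h_le

lemma isBounded_range_toLp_of_forall_bddAbove_sum {S ι κ : Type*} [Fintype ι] [Fintype κ]
    {u : ι → S → κ → ℝ}
    (hu : ∀ g : ι × κ → ℝ, BddAbove (Set.range fun s => ∑ i, ∑ j, g (i, j) * u i s j)) (i : ι) :
    Bornology.IsBounded (Set.range fun s => WithLp.toLp 2 (u i s)) := by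
  have h_uncurry : Bornology.IsBounded (Set.range fun s (p : ι × κ) => u p.1 s p.2) := by
    refine isBounded_range_of_forall_bddAbove_dotProduct fun g => ?_
    simpa only [dotProduct, Fintype.sum_prod_type] using hu g
  have h_coord : Bornology.IsBounded (Set.range (u i)) := by
    refine Bornology.forall_isBounded_image_eval_iff.1 fun j => ?_
    have h_eval := Bornology.forall_isBounded_image_eval_iff.2 h_uncurry (i, j)
    rw [← Set.range_comp] at h_eval ⊢
    exact h_eval
  simpa only [← Set.range_comp, Function.comp_def] using
    (PiLp.lipschitzWith_toLp 2 fun _ : κ => ℝ).isBounded_image h_coord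

theorem rademacher_truncated_margin_le_gaussian_general {X : Type*} (n c : ℕ) (hn : 1 ≤ n)
    (x : Fin n → X) (y : Fin n → Fin c) (θ : ℝ) (H : Set (X → Fin c → ℝ)) (hHne : H.Nonempty)
    (hbdd : ∀ g : Fin n × Fin c → ℝ,
      BddAbove (Set.range fun h : H => ∑ i, ∑ j, g (i, j) * (h : X → Fin c → ℝ) (x i) j)) :
    (1 / (2 : ℝ) ^ n) * ∑ σ : Fin n → Bool,
        (⨆ h : H,
          (1 / (n : ℝ)) * ∑ i, radSign (σ i) * min (mcMargin (h : X → Fin c → ℝ) (x i) (y i)) θ) ≤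
      (Real.sqrt (2 * π) / n) *
        ∫ g : Fin n × Fin c → ℝ,
          (⨆ h : H, ∑ i, ∑ j, g (i, j) * (h : X → Fin c → ℝ) (x i) j)
          ∂(Measure.pi fun _ : Fin n × Fin c => gaussianReal 0 1) := by
  have := hHne.to_subtype
  let v (i : Fin n) (h : H) : EuclideanSpace ℝ (Fin c) := WithLp.toLp 2 (h.1 (x i))
  have hv (i : Fin n) : Bornology.IsBounded (Set.range (v i)) :=
    isBounded_range_toLp_of_forall_bddAbove_sum hbdd i
  have h_contraction := sum_iSup_radSign_le_integral_iSup_inner zero_le_two hv fun i h h' =>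
    min_mcMargin_sub_min_mcMargin_le h.1 h'.1 (x i) (y i) θ
  have h_gaussian : ∫ g, ⨆ h, ∑ i, ⟪v i h, g i⟫ ∂Measure.pi (fun _ => stdGaussian _) =
      ∫ g : Fin n × Fin c → ℝ, ⨆ h : H, ∑ i, ∑ j, g (i, j) * h.1 (x i) j
        ∂Measure.pi fun _ => gaussianReal 0 1 :=
    (integral_pi_gaussianReal_prod _).symm
  have h_const : 2 * √(π / 2) = √(2 * π) := by
    rw [show 2 * π = 2 ^ 2 * (π / 2) by ring, Real.sqrt_mul (by positivity),
      Real.sqrt_sq zero_le_two]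
  have hn_pos : (0 : ℝ) < n := by exact_mod_cast hn
  rw [h_gaussian, h_const] at h_contraction
  simp only [← Real.mul_iSup_of_nonneg (show 0 ≤ 1 / (n : ℝ) by positivity), ← Finset.mul_sum]
  rw [mul_left_comm, one_div_mul_eq_div, one_div_mul_eq_div, div_mul_eq_mul_div]
  rwa [div_le_div_iff_of_pos_right hn_pos, div_le_iff₀' (by positivity)]

/-- **Rademacher complexity of the truncated-margin class is controlled by the Gaussian
complexity with one Gaussian per class component** (step in the proof of Theorem 1):
the empirical Rademacher complexity of `{(x,y) ↦ min(ρ_h(x,y), θ) : h ∈ H}` is at most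
`(√(2π)/n) · E_g[sup_{h∈H} Σ_i Σ_j g_{ij} h_j(x_i)]`. -/
theorem rademacher_truncated_margin_le_gaussian {X : Type*} (n c : ℕ) (hn : 1 ≤ n) (hc : 1 ≤ c)
    (x : Fin n → X) (y : Fin n → Fin c) (θ : ℝ) (hθ : 0 < θ)
    (H : Set (X → Fin c → ℝ)) (hHcount : H.Countable) (hHne : H.Nonempty)
    (hbdd₁ : ∀ σ : Fin n → Bool,
      BddAbove (Set.range fun h : H =>
        (1 / (n : ℝ)) * ∑ i, radSign (σ i) * min (mcMargin (h : X → Fin c → ℝ) (x i) (y i)) θ))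
    (hbdd₂ : ∀ g : Fin n × Fin c → ℝ,
      BddAbove (Set.range fun h : H => ∑ i, ∑ j, g (i, j) * (h : X → Fin c → ℝ) (x i) j))
    (hint : Integrable
      (fun g : Fin n × Fin c → ℝ => ⨆ h : H, ∑ i, ∑ j, g (i, j) * (h : X → Fin c → ℝ) (x i) j)
      (Measure.pi fun _ : Fin n × Fin c => gaussianReal 0 1)) :
    (1 / (2 : ℝ) ^ n) * ∑ σ : Fin n → Bool,
        (⨆ h : H,
          (1 / (n : ℝ)) * ∑ i, radSign (σ i) * min (mcMargin (h : X → Fin c → ℝ) (x i) (y i)) θ) ≤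
      (Real.sqrt (2 * π) / n) *
        ∫ g : Fin n × Fin c → ℝ,
          (⨆ h : H, ∑ i, ∑ j, g (i, j) * (h : X → Fin c → ℝ) (x i) j)
          ∂(Measure.pi fun _ : Fin n × Fin c => gaussianReal 0 1) :=
  rademacher_truncated_margin_le_gaussian_general n c hn x y θ H hHne hbdd₂
end
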